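/- arXiv:1909.09372 — 5 statements merged into one kernel-verified Lean document; each statement's English description precedes it below -/
import Mathlib

section
/- Let N ≥ 1, d ≥ 1, t_1,…,t_{d+1} ∈ ℂ, and let μ = (μ_1,…,μ_n) be a tuple of nonnegative integers. Then the following identity of ℂ-valued functions holds at every point x = (x_1,…,x_N) ∈ ℝ^N: Σ_{i=1}^N ∂/∂x_i [ x_i^{μ_1} p_{μ_2}(x)⋯p_{μ_n}(x) Δ(x)² e^{−Σ_{a=1}^N V(x_a)} ] = − Q_μ(x) Δ(x)² e^{−Σ_{a=1}^N V(x_a)}. -/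
/-!
By the product rule, `∂/∂x_i` of `x_i^{μ₁} p_{μ₂}⋯p_{μ_n} Δ² e^{-∑ V}` splits into four terms, and
summing each over `i` gives one piece of `-Q_μ Δ² e^{-∑ V}`:

* the derivative of `x_i^{μ₁}` gives `μ₁ p_{μ₁-1}`;
* the derivative of `p_{μ₂}⋯p_{μ_n}` gives the last sum of `Q_μ`, since `∂_i p_k = k x_i^{k-1}`;
* the derivative of the exponential gives the first sum of `Q_μ`;
* the derivative of `Δ²` gives `∑_j p_j p_{μ₁-1-j} - μ₁ p_{μ₁-1}` (`sum_pow_mul_deriv_vdmC`), whose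
  last term cancels the first contribution.

For the last point, if the coordinates are distinct then `Δ` is nonzero with logarithmic derivative
`∑_{a<b} (δ_{ai} - δ_{bi}) / (x_a - x_b)`, so
`∑_i x_i^m ∂_i Δ / Δ = ∑_{a<b} (x_a^m - x_b^m) / (x_a - x_b) = ∑_{a<b} ∑_{j<m} x_a^j x_b^{m-1-j}`.
The inner sum is symmetric in `a, b`, so twice this is the full double sum minus its diagonal.
If two coordinates coincide, both sides vanish because `Δ` divides `∂_i Δ²`.
-/

open Finset

/-- `p_k(x) = ∑ x_i^k`, as a complex number. -/
noncomputable def pkC (N : ℕ) (k : ℕ) (x : Fin N → ℝ) : ℂ := ∑ i, (x i : ℂ) ^ k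

/-- `p_{μ₂} ⋯ p_{μ_n}(x)` for a list of indices. -/
noncomputable def pListC (N : ℕ) (μs : List ℕ) (x : Fin N → ℝ) : ℂ :=
  (μs.map (fun m => pkC N m x)).prod

/-- The Vandermonde determinant `Δ(x) = ∏_{i<j} (x_i - x_j)`. -/
noncomputable def vdmC (N : ℕ) (x : Fin N → ℝ) : ℂ :=
  ∏ i : Fin N, ∏ j ∈ Finset.Ioi i, ((x i : ℂ) - (x j : ℂ))

/-- The potential `V(s) = ∑_{k=1}^{d+1} (t_k / k) s^k`. -/
noncomputable def Vpot (d : ℕ) (t : ℕ → ℂ) (s : ℝ) : ℂ :=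
  ∑ k ∈ Finset.range (d + 1), (t (k + 1) / (k + 1)) * (s : ℂ) ^ (k + 1)

/-- The weight `Δ(x)² e^{-∑_a V(x_a)}`. -/
noncomputable def wt (N d : ℕ) (t : ℕ → ℂ) (x : Fin N → ℝ) : ℂ :=
  vdmC N x ^ 2 * Complex.exp (- ∑ a : Fin N, Vpot d t (x a))

/-- The loop-equation polynomial `Q_μ` evaluated at `x`, for `μ = μ₁ :: μs`. -/
noncomputable def QloopFn (N d : ℕ) (t : ℕ → ℂ) (μ₁ : ℕ) (μs : List ℕ)
    (x : Fin N → ℝ) : ℂ :=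
  (∑ j ∈ Finset.range (d + 1), t (j + 1) * pkC N (μ₁ + j) x * pListC N μs x)
  - (∑ j ∈ Finset.range μ₁, pkC N j x * pkC N (μ₁ - 1 - j) x * pListC N μs x)
  - (∑ i : Fin μs.length,
      (μs.get i : ℂ) * pkC N (μ₁ + μs.get i - 1) x * pListC N (μs.eraseIdx i) x)

lemma hasDerivAt_ofReal_update {N : ℕ} (x : Fin N → ℝ) (i k : Fin N) :
    HasDerivAt (fun s : ℝ => ((Function.update x i s k : ℝ) : ℂ)) (if k = i then 1 else 0)
      (x i) := by
  by_cases h : k = i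
  · subst h
    simpa using (hasDerivAt_id (x k)).ofReal_comp
  · simpa [h] using hasDerivAt_const (x i) ((x k : ℝ) : ℂ)

lemma hasDerivAt_pkC {N : ℕ} (k : ℕ) (x : Fin N → ℝ) (i : Fin N) :
    HasDerivAt (fun s : ℝ => pkC N k (Function.update x i s)) (k * (x i : ℂ) ^ (k - 1)) (x i) := by
  unfold pkC
  have h := HasDerivAt.fun_sum (u := Finset.univ) fun a _ => (hasDerivAt_ofReal_update x i a).fun_pow k
  refine h.congr_deriv ?_
  simp

lemma hasDerivAt_pListC {N : ℕ} (μs : List ℕ) (x : Fin N → ℝ) (i : Fin N) :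
    HasDerivAt (fun s : ℝ => pListC N μs (Function.update x i s))
      (∑ j : Fin μs.length,
        (μs.get j : ℂ) * (x i : ℂ) ^ (μs.get j - 1) * pListC N (μs.eraseIdx j) x) (x i) := by
  induction μs with
  | nil => simpa [pListC] using hasDerivAt_const (x i) (1 : ℂ)
  | cons m l ih =>
    have h := (hasDerivAt_pkC m x i).fun_mul ih
    have e : ∀ (a : ℕ) (l : List ℕ) (y : Fin N → ℝ),
        pListC N (a :: l) y = pkC N a y * pListC N l y := by
      intro a l y
      simp [pListC]
    simp only [e]
    refine h.congr_deriv ?_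
    simp only [Function.update_eq_self]
    refine Eq.trans ?_ (Fin.sum_univ_succ (n := l.length) _).symm
    rw [Finset.mul_sum]
    congr 1
    refine Finset.sum_congr rfl fun j _ => ?_
    simp only [List.get_eq_getElem, Fin.val_succ, List.getElem_cons_succ,
      List.eraseIdx_cons_succ, e]
    ring

/-- Logarithmic derivatives of the factors of a product add up. -/
lemma hasDerivAt_prod_mul {ι : Type*} (S : Finset ι) (f : ι → ℝ → ℂ) (c : ι → ℂ) (s : ℝ)
    (h : ∀ a ∈ S, HasDerivAt (f a) (f a s * c a) s) :
    HasDerivAt (fun u => ∏ a ∈ S, f a u) ((∏ a ∈ S, f a s) * ∑ a ∈ S, c a) s := by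
  classical
  induction S using Finset.induction_on with
  | empty => simpa using hasDerivAt_const s (1 : ℂ)
  | insert a S ha ih =>
    have h1 := (h a (by simp)).fun_mul (ih fun b hb => h b (by simp [hb]))
    simp only [Finset.prod_insert ha, Finset.sum_insert ha]
    exact h1.congr_deriv (by ring)

lemma differentiableAt_vdmC {N : ℕ} (x : Fin N → ℝ) (i : Fin N) :
    DifferentiableAt ℝ (fun s : ℝ => vdmC N (Function.update x i s)) (x i) := by
  unfold vdmC
  refine DifferentiableAt.fun_finsetProd fun a _ => DifferentiableAt.fun_finsetProd fun b _ => ?_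
  exact ((hasDerivAt_ofReal_update x i a).sub (hasDerivAt_ofReal_update x i b)).differentiableAt

lemma hasDerivAt_vdmC {N : ℕ} (x : Fin N → ℝ) (i : Fin N) (hv : vdmC N x ≠ 0) :
    HasDerivAt (fun s : ℝ => vdmC N (Function.update x i s))
      (vdmC N x * ∑ a : Fin N, ∑ b ∈ Finset.Ioi a,
        ((if a = i then 1 else 0) - (if b = i then 1 else 0)) / ((x a : ℂ) - x b)) (x i) := by
  have hne : ∀ a, ∀ b ∈ Finset.Ioi a, (x a : ℂ) - x b ≠ 0 := by
    intro a b hb h0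
    exact hv (Finset.prod_eq_zero (Finset.mem_univ a) (Finset.prod_eq_zero hb h0))
  have h := hasDerivAt_prod_mul Finset.univ
    (fun a s => ∏ b ∈ Finset.Ioi a,
      (((Function.update x i s a : ℝ) : ℂ) - ((Function.update x i s b : ℝ) : ℂ)))
    (fun a => ∑ b ∈ Finset.Ioi a,
        ((if a = i then 1 else 0) - (if b = i then 1 else 0)) / ((x a : ℂ) - x b)) (x i)
    (fun a _ => hasDerivAt_prod_mul (Finset.Ioi a)
      (fun b s => ((Function.update x i s a : ℝ) : ℂ) - ((Function.update x i s b : ℝ) : ℂ))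
      (fun b => ((if a = i then 1 else 0) - (if b = i then 1 else 0)) / ((x a : ℂ) - x b)) (x i)
      (fun b hb => by
        refine ((hasDerivAt_ofReal_update x i a).fun_sub (hasDerivAt_ofReal_update x i b)).congr_deriv ?_
        simp only [Function.update_eq_self]
        exact (mul_div_cancel₀ _ (hne a b hb)).symm))
  simpa only [Function.update_eq_self, vdmC] using h

/-- The sum of the symmetric kernel `∑_{j<m} x_a^j x_b^{m-1-j}` over `a < b`, doubled, is the full
double sum minus the diagonal. -/
lemma two_mul_sum_sum_Ioi {N : ℕ} (m : ℕ) (x : Fin N → ℝ) :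
    2 * ∑ a : Fin N, ∑ b ∈ Finset.Ioi a,
        ∑ j ∈ Finset.range m, (x a : ℂ) ^ j * (x b : ℂ) ^ (m - 1 - j)
      = ∑ j ∈ Finset.range m, pkC N j x * pkC N (m - 1 - j) x - m * pkC N (m - 1) x := by
  set h : Fin N → Fin N → ℂ := fun a b =>
    ∑ j ∈ Finset.range m, (x a : ℂ) ^ j * (x b : ℂ) ^ (m - 1 - j) with hh
  have hsymm : ∀ a b, h a b = h b a := fun a b => (Commute.all (x a : ℂ) (x b)).geom_sum₂_comm m
  have hdiag : ∀ a, h a a = m * (x a : ℂ) ^ (m - 1) := fun a => geom_sum₂_self (x a : ℂ) m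
  have hfull : ∑ a, ∑ b, h a b = ∑ j ∈ Finset.range m, pkC N j x * pkC N (m - 1 - j) x := by
    simp only [pkC, Finset.sum_mul_sum, hh]
    simp_rw [Finset.sum_comm (s := Finset.univ) (t := Finset.range m)]
  have hoff := Finset.sum_sum_Ioi_add_eq_sum_sum_off_diag (fun a b => h a b)
  have hsplit : ∀ a, ∑ b, h b a = h a a + ∑ b ∈ ({a}ᶜ : Finset (Fin N)), h b a := by
    intro a
    exact Fintype.sum_eq_add_sum_compl a (fun b => h b a)
  have hfull' : ∑ a, ∑ b, h a b = ∑ a, h a a + ∑ a, ∑ b ∈ ({a}ᶜ : Finset (Fin N)), h b a := by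
    rw [← Finset.sum_add_distrib, Finset.sum_comm]
    exact Finset.sum_congr rfl fun a _ => hsplit a
  have hd : ∑ a, h a a = m * pkC N (m - 1) x := by
    simp only [hdiag, pkC, Finset.mul_sum]
  rw [← hfull, hfull', hd, ← hoff, add_sub_cancel_left, Finset.mul_sum]
  refine Finset.sum_congr rfl fun a _ => ?_
  rw [Finset.mul_sum]
  refine Finset.sum_congr rfl fun b _ => ?_
  rw [hsymm b a]
  ring

/-- The contribution of the derivatives of `Δ²` to the loop equation. -/
lemma sum_pow_mul_deriv_vdmC {N : ℕ} (m : ℕ) (x : Fin N → ℝ) :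
    ∑ i : Fin N, (x i : ℂ) ^ m *
        (2 * vdmC N x * deriv (fun s : ℝ => vdmC N (Function.update x i s)) (x i))
      = (∑ j ∈ Finset.range m, pkC N j x * pkC N (m - 1 - j) x - m * pkC N (m - 1) x)
        * vdmC N x ^ 2 := by
  by_cases hv : vdmC N x = 0
  · simp [hv]
  have hne : ∀ a, ∀ b ∈ Finset.Ioi a, (x a : ℂ) - x b ≠ 0 := by
    intro a b hb h0
    exact hv (Finset.prod_eq_zero (Finset.mem_univ a) (Finset.prod_eq_zero hb h0))
  have key : ∑ i : Fin N, (x i : ℂ) ^ m * ∑ a : Fin N, ∑ b ∈ Finset.Ioi a,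
        ((if a = i then 1 else 0) - (if b = i then 1 else 0)) / ((x a : ℂ) - x b)
      = ∑ a : Fin N, ∑ b ∈ Finset.Ioi a,
        ∑ j ∈ Finset.range m, (x a : ℂ) ^ j * (x b : ℂ) ^ (m - 1 - j) := by
    simp only [Finset.mul_sum]
    rw [Finset.sum_comm]
    refine Finset.sum_congr rfl fun a _ => ?_
    rw [Finset.sum_comm]
    refine Finset.sum_congr rfl fun b hb => ?_
    rw [eq_div_of_mul_eq (hne a b hb) ((Commute.all (x a : ℂ) (x b)).geom_sum₂_mul m)]
    simp only [← mul_div_assoc, ← Finset.sum_div, mul_sub, Finset.sum_sub_distrib, mul_ite,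
      mul_one, mul_zero, Finset.sum_ite_eq, Finset.mem_univ, if_true]
  rw [← two_mul_sum_sum_Ioi, ← key, Finset.mul_sum, Finset.sum_mul]
  refine Finset.sum_congr rfl fun i _ => ?_
  rw [(hasDerivAt_vdmC x i hv).deriv]
  ring

lemma hasDerivAt_Vpot (d : ℕ) (t : ℕ → ℂ) (s : ℝ) :
    HasDerivAt (Vpot d t) (∑ k ∈ Finset.range (d + 1), t (k + 1) * (s : ℂ) ^ k) s := by
  have h := HasDerivAt.fun_sum (u := Finset.range (d + 1)) fun k _ =>
    ((Complex.ofRealCLM.hasDerivAt (x := s)).fun_pow (k + 1)).const_mul (t (k + 1) / ((k : ℂ) + 1))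
  refine h.congr_deriv (Finset.sum_congr rfl fun k _ => ?_)
  have hk : (k : ℂ) + 1 ≠ 0 := Nat.cast_add_one_ne_zero k
  simp
  field_simp

lemma hasDerivAt_exp_Vpot {N : ℕ} (d : ℕ) (t : ℕ → ℂ) (x : Fin N → ℝ) (i : Fin N) :
    HasDerivAt (fun s : ℝ => Complex.exp (- ∑ a : Fin N, Vpot d t (Function.update x i s a)))
      (Complex.exp (- ∑ a : Fin N, Vpot d t (x a)) *
        -(∑ k ∈ Finset.range (d + 1), t (k + 1) * (x i : ℂ) ^ k)) (x i) := by
  have h1 : ∀ a, HasDerivAt (fun s : ℝ => Vpot d t (Function.update x i s a))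
      (if a = i then ∑ k ∈ Finset.range (d + 1), t (k + 1) * (x i : ℂ) ^ k else 0) (x i) := by
    intro a
    by_cases h : a = i
    · subst h
      simpa using hasDerivAt_Vpot d t (x a)
    · simpa [h] using hasDerivAt_const (x i) (Vpot d t (x a))
  have h := (HasDerivAt.fun_sum (u := Finset.univ) fun a _ => h1 a).fun_neg.cexp
  simpa only [Function.update_eq_self, Finset.sum_ite_eq', Finset.mem_univ, if_true] using h

theorem stmt6 (N d : ℕ) (hN : 1 ≤ N) (hd : 1 ≤ d) (t : ℕ → ℂ)
    (μ₁ : ℕ) (μs : List ℕ) (x : Fin N → ℝ) :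
    (∑ i : Fin N, deriv (fun s : ℝ =>
        (s : ℂ) ^ μ₁ * pListC N μs (Function.update x i s)
          * wt N d t (Function.update x i s)) (x i))
    = - QloopFn N d t μ₁ μs x * wt N d t x := by
  set P := pListC N μs x with hP
  set v := vdmC N x with hv
  set E := Complex.exp (- ∑ a : Fin N, Vpot d t (x a)) with hE
  have hder : ∀ i : Fin N, deriv (fun s : ℝ =>
        (s : ℂ) ^ μ₁ * pListC N μs (Function.update x i s)
          * wt N d t (Function.update x i s)) (x i)
      = (μ₁ * (x i : ℂ) ^ (μ₁ - 1)) * (P * v ^ 2 * E)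
        + (∑ j : Fin μs.length, (x i : ℂ) ^ μ₁ *
          ((μs.get j : ℂ) * (x i : ℂ) ^ (μs.get j - 1) * pListC N (μs.eraseIdx j) x)) * (v ^ 2 * E)
        + ((x i : ℂ) ^ μ₁ *
          (2 * v * deriv (fun s : ℝ => vdmC N (Function.update x i s)) (x i))) * (P * E)
        - (∑ k ∈ Finset.range (d + 1), t (k + 1) * (x i : ℂ) ^ (μ₁ + k)) * (P * v ^ 2 * E) := by
    intro i
    have h := (((Complex.ofRealCLM.hasDerivAt (x := x i)).fun_pow μ₁).fun_mul
      (hasDerivAt_pListC μs x i)).fun_mul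
      (((differentiableAt_vdmC x i).hasDerivAt.fun_pow 2).fun_mul (hasDerivAt_exp_Vpot d t x i))
    have hV : ∑ k ∈ Finset.range (d + 1), t (k + 1) * (x i : ℂ) ^ (μ₁ + k)
        = (x i : ℂ) ^ μ₁ * ∑ k ∈ Finset.range (d + 1), t (k + 1) * (x i : ℂ) ^ k := by
      rw [Finset.mul_sum]
      exact Finset.sum_congr rfl fun k _ => by ring
    refine h.deriv.trans ?_
    rw [hV, ← Finset.mul_sum]
    simp only [Function.update_eq_self, Complex.ofRealCLM_apply, ← hP, ← hv, ← hE,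
      Complex.ofReal_one]
    push_cast
    ring
  have h1 : ∑ i : Fin N, (μ₁ * (x i : ℂ) ^ (μ₁ - 1)) = μ₁ * pkC N (μ₁ - 1) x := by
    rw [pkC, Finset.mul_sum]
  have h2 : ∑ i : Fin N, ∑ j : Fin μs.length, (x i : ℂ) ^ μ₁ *
          ((μs.get j : ℂ) * (x i : ℂ) ^ (μs.get j - 1) * pListC N (μs.eraseIdx j) x)
      = ∑ j : Fin μs.length,
        (μs.get j : ℂ) * pkC N (μ₁ + μs.get j - 1) x * pListC N (μs.eraseIdx j) x := by
    rw [Finset.sum_comm]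
    refine Finset.sum_congr rfl fun j _ => ?_
    -- At index `0` truncated subtraction makes the exponents disagree, but the coefficient is `0`.
    rcases Nat.eq_zero_or_pos (μs.get j) with h0 | h0
    · simp only [h0, Nat.cast_zero, zero_mul, mul_zero, Finset.sum_const_zero]
    · rw [pkC, Finset.mul_sum, Finset.sum_mul, Nat.add_sub_assoc h0]
      exact Finset.sum_congr rfl fun i _ => by ring
  have h4 : ∑ i : Fin N, ∑ k ∈ Finset.range (d + 1), t (k + 1) * (x i : ℂ) ^ (μ₁ + k)
      = ∑ k ∈ Finset.range (d + 1), t (k + 1) * pkC N (μ₁ + k) x := by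
    rw [Finset.sum_comm]
    simp only [pkC, Finset.mul_sum]
  simp only [hder, Finset.sum_add_distrib, Finset.sum_sub_distrib, ← Finset.sum_mul, h1, h2, h4]
  rw [hv, sum_pow_mul_deriv_vdmC]
  simp only [QloopFn, wt, ← Finset.sum_mul, ← hP, ← hv, ← hE]
  ring
end

section
/- Let N ≥ 1, let d ≥ 1 be odd, and let t_1,…,t_{d+1} be real numbers with t_{d+1} > 0 (so V has even degree d+1 and positive leading coefficient). Then for every tuple μ = (μ_1,…,μ_n) of nonnegative integers, the function x ↦ Q_μ(x) Δ(x)² e^{−Σ_{a=1}^N V(x_a)} is Lebesgue-integrable on ℝ^N and ∫_{ℝ^N} Q_μ(x) Δ(x)² e^{−Σ_{a=1}^N V(x_a)} dx = 0. -/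
/-!
The integrand is minus the divergence of a vector field decaying at infinity. With `m = μ₁`,
`G = p_{μ₂} ⋯ p_{μ_n} Δ²` and `W = ∑_a V(x_a)`, the field is `(x_i ^ m * G * e^{-W})_i`, and

`∑_i ∂_i (x_i ^ m G e^{-W}) = (m p_{m-1} G + D G - G D W) e^{-W}`, where `D = ∑_i x_i ^ m ∂_i`.

The derivation `D` is computed in `MvPolynomial (Fin N) ℝ`: it sends `p_k` to `k p_{m+k-1}`, it
sends `W` to `∑_j t_{j+1} p_{m+j}`, and each factor `x_i - x_j` of `Δ` is an eigenvector,
`D (x_i - x_j) = h_{ij} (x_i - x_j)` with `h_{ij} = ∑_{l<m} x_i ^ l x_j ^ (m-1-l)`. Hence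
`D Δ² = (∑_{i≠j} h_{ij}) Δ² = (∑_{l<m} p_l p_{m-1-l} - m p_{m-1}) Δ²`, and the divergence is
`-Q_μ Δ² e^{-W}`.

For integrability, `V` has even degree and positive leading coefficient, so `x ^ n e^{-V(x)}` is
integrable on each half line; products over the coordinates give the integrability of every
polynomial times `e^{-W}`. Then each `∂_i` of such a function has integral zero.
-/

open Finset MeasureTheory

/-- `p_k(x) = ∑ x_i^k`. -/
noncomputable def pkR (N : ℕ) (k : ℕ) (x : Fin N → ℝ) : ℝ := ∑ i, (x i) ^ k

/-- `p_{μ₂} ⋯ p_{μ_n}(x)` for a list of indices. -/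
noncomputable def pListR (N : ℕ) (μs : List ℕ) (x : Fin N → ℝ) : ℝ :=
  (μs.map (fun m => pkR N m x)).prod

/-- The Vandermonde determinant `Δ(x) = ∏_{i<j} (x_i - x_j)`. -/
noncomputable def vdmR (N : ℕ) (x : Fin N → ℝ) : ℝ :=
  ∏ i : Fin N, ∏ j ∈ Finset.Ioi i, (x i - x j)

/-- The potential `V(s) = ∑_{k=1}^{d+1} (t_k / k) s^k`. -/
noncomputable def VpotR (d : ℕ) (t : ℕ → ℝ) (s : ℝ) : ℝ :=
  ∑ k ∈ Finset.range (d + 1), (t (k + 1) / (k + 1)) * s ^ (k + 1)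

/-- The loop-equation polynomial `Q_μ` evaluated at `x`, for `μ = μ₁ :: μs`. -/
noncomputable def QloopFnR (N d : ℕ) (t : ℕ → ℝ) (μ₁ : ℕ) (μs : List ℕ)
    (x : Fin N → ℝ) : ℝ :=
  (∑ j ∈ Finset.range (d + 1), t (j + 1) * pkR N (μ₁ + j) x * pListR N μs x)
  - (∑ j ∈ Finset.range μ₁, pkR N j x * pkR N (μ₁ - 1 - j) x * pListR N μs x)
  - (∑ i : Fin μs.length,
      (μs.get i : ℝ) * pkR N (μ₁ + μs.get i - 1) x * pListR N (μs.eraseIdx i) x)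

namespace LoopEq

open MvPolynomial Asymptotics Filter

/-! ### Integrability of polynomials against the weight -/

theorem VpotR_continuous (d : ℕ) (t : ℕ → ℝ) : Continuous (VpotR d t) := by
  unfold VpotR; fun_prop

theorem VpotR_sub_tendsto (d : ℕ) (hd : 1 ≤ d) (t : ℕ → ℝ) (ht : 0 < t (d + 1)) :
    Tendsto (fun x : ℝ => VpotR d t x - 2 * x) atTop atTop := by
  obtain ⟨d, rfl⟩ : ∃ e, d = e + 1 := ⟨d - 1, by omega⟩
  -- `V - 2x` is the leading monomial plus a polynomial `R` of lower degree
  set R : Polynomial ℝ := (∑ k ∈ Finset.range (d + 1),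
    Polynomial.C (t (k + 1) / (k + 1)) * Polynomial.X ^ (k + 1)) - Polynomial.C 2 * Polynomial.X
    with hR
  set c : ℝ := t (d + 1 + 1) / ((d + 1 : ℕ) + 1) with hc
  have hc0 : 0 < c := by positivity
  have hRdeg : R.degree < ((d + 2 : ℕ) : WithBot ℕ) := by
    rw [hR]
    refine (Polynomial.degree_sub_le _ _).trans_lt (max_lt ?_ ?_)
    · refine (Polynomial.degree_sum_le _ _).trans_lt ?_
      rw [Finset.sup_lt_iff (WithBot.bot_lt_coe _)]
      intro k hk
      refine (Polynomial.degree_C_mul_X_pow_le _ _).trans_lt ?_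
      have := Finset.mem_range.1 hk
      exact_mod_cast (by omega : k + 1 < d + 2)
    · refine (Polynomial.degree_C_mul_X_le _).trans_lt ?_
      exact_mod_cast (by omega : 1 < d + 2)
  have hlead : (Polynomial.C c * Polynomial.X ^ (d + 2)).degree = ((d + 2 : ℕ) : WithBot ℕ) :=
    Polynomial.degree_C_mul_X_pow _ hc0.ne'
  have h := Polynomial.tendsto_atTop_of_leadingCoeff_nonneg
    (P := Polynomial.C c * Polynomial.X ^ (d + 2) + R) (by
      rw [Polynomial.degree_add_eq_left_of_degree_lt (by rw [hlead]; exact hRdeg), hlead]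
      exact_mod_cast (by omega : 0 < d + 2)) (by
      rw [Polynomial.leadingCoeff_add_of_degree_lt' (by rw [hlead]; exact hRdeg)]
      simpa using hc0.le)
  refine h.congr fun x => ?_
  simp only [VpotR, hR, Finset.sum_range_succ _ (d + 1), Polynomial.eval_add,
    Polynomial.eval_sub, Polynomial.eval_mul, Polynomial.eval_C, Polynomial.eval_pow,
    Polynomial.eval_X, Polynomial.eval_finsetSum, hc]
  ring

theorem integrableOn_Ioi (d : ℕ) (hd : 1 ≤ d) (t : ℕ → ℝ) (ht : 0 < t (d + 1)) (n : ℕ) :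
    IntegrableOn (fun x : ℝ => x ^ n * Real.exp (- VpotR d t x)) (Set.Ioi 0) := by
  have hV := VpotR_continuous d t
  refine integrable_of_isBigO_exp_neg (b := 1) one_pos (by fun_prop) ?_
  have h1 := Real.tendsto_pow_mul_exp_neg_atTop_nhds_zero n
  have h2 := Real.tendsto_exp_neg_atTop_nhds_zero.comp (VpotR_sub_tendsto d hd t ht)
  have h3 := ((h1.mul h2).isBigO_one ℝ).mul
    (isBigO_refl (fun x : ℝ => Real.exp (-1 * x)) atTop)
  refine h3.congr (fun x => ?_) (fun x => by simp)
  simp only [Function.comp]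
  rw [mul_assoc, mul_assoc, ← Real.exp_add, ← Real.exp_add]
  congr 2
  ring

/-- The negative half line reduces to the positive one for the coefficients `(-1)^k t_k`, whose
top coefficient is still positive because `d + 1` is even. -/
theorem integrable_one (d : ℕ) (hd : Odd d) (t : ℕ → ℝ) (ht : 0 < t (d + 1)) (n : ℕ) :
    Integrable (fun x : ℝ => x ^ n * Real.exp (- VpotR d t x)) := by
  have h1 := integrableOn_Ioi d hd.pos t ht n
  have h2 := integrableOn_Ioi d hd.pos (fun k => (-1) ^ k * t k)
    (by simpa [hd.add_one.neg_one_pow] using ht) n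
  have h3 : IntegrableOn (fun x : ℝ => x ^ n * Real.exp (- VpotR d t x)) (Set.Iio 0) := by
    rw [← integrableOn_Iic_iff_integrableOn_Iio]
    have h4 := ((integrableOn_Ici_iff_integrableOn_Ioi enorm_ne_top).2 h2).comp_neg.const_mul ((-1 : ℝ) ^ n)
    simp only [Set.neg_Ici, neg_zero] at h4
    refine h4.congr (Eventually.of_forall fun x => ?_)
    have hV : VpotR d (fun k => (-1) ^ k * t k) (-x) = VpotR d t x := by
      unfold VpotR
      refine Finset.sum_congr rfl fun k _ => ?_
      rw [neg_pow x, show (-1 : ℝ) ^ (k + 1) * t (k + 1) / (k + 1) * ((-1) ^ (k + 1) * x ^ (k + 1))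
        = ((-1) * (-1)) ^ (k + 1) * (t (k + 1) / (k + 1) * x ^ (k + 1)) by rw [mul_pow]; ring]
      simp
    simp only [hV]
    rw [← mul_assoc, ← mul_pow]
    simp
  rw [← integrableOn_univ, ← Set.Iic_union_Ioi (a := (0 : ℝ))]
  exact ((integrableOn_Iic_iff_integrableOn_Iio).2 h3).union h1

/-- The Boltzmann weight `e^{-∑ V(x_a)}`. -/
noncomputable def wt (N d : ℕ) (t : ℕ → ℝ) (x : Fin N → ℝ) : ℝ :=
  Real.exp (- ∑ a : Fin N, VpotR d t (x a))

theorem integrable_poly (N d : ℕ) (hd : Odd d) (t : ℕ → ℝ) (ht : 0 < t (d + 1))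
    (P : MvPolynomial (Fin N) ℝ) :
    Integrable (fun x : Fin N → ℝ => eval x P * wt N d t x) := by
  induction P using MvPolynomial.induction_on' with
  | monomial u a =>
    have h := (Integrable.fintype_prod (μ := fun _ : Fin N => (volume : Measure ℝ))
      (f := fun (i : Fin N) (x : ℝ) => x ^ u i * Real.exp (- VpotR d t x))
      (fun i => integrable_one d hd t ht (u i))).const_mul a
    refine h.congr (Eventually.of_forall fun x => ?_)
    simp only [eval_monomial, wt, Finset.prod_mul_distrib, ← Finset.sum_neg_distrib,
      Real.exp_sum, mul_assoc]
    rw [Finsupp.prod_fintype _ _ (by simp)]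
  | add p q hp hq => simpa only [map_add, add_mul] using! hp.add hq

/-! ### Vanishing of the integral of a derivative -/

/-- The total potential `∑_a V(x_a)` as a polynomial. -/
noncomputable def Wpoly (N d : ℕ) (t : ℕ → ℝ) : MvPolynomial (Fin N) ℝ :=
  ∑ k ∈ Finset.range (d + 1), C (t (k + 1) / (k + 1)) * psum (Fin N) ℝ (k + 1)

theorem eval_psum (N k : ℕ) (x : Fin N → ℝ) : eval x (psum (Fin N) ℝ k) = pkR N k x := by
  simp [psum, pkR]

theorem wt_eq (N d : ℕ) (t : ℕ → ℝ) (x : Fin N → ℝ) :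
    wt N d t x = Real.exp (- eval x (Wpoly N d t)) := by
  simp only [wt, Wpoly, VpotR, map_sum, map_mul, eval_C, eval_psum, pkR]
  rw [Finset.sum_comm]
  simp [Finset.mul_sum]

theorem hasLineDerivAt_eval {N : ℕ} (P : MvPolynomial (Fin N) ℝ) (i : Fin N) (x : Fin N → ℝ) :
    HasLineDerivAt ℝ (fun x => eval x P) (eval x (pderiv i P)) x (Pi.single i 1) := by
  unfold HasLineDerivAt
  induction P using MvPolynomial.induction_on with
  | C a => simpa using hasDerivAt_const (0 : ℝ) a
  | add p q hp hq => simpa only [map_add] using! hp.add hq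
  | mul_X p j hp =>
    have hX : HasDerivAt (fun s : ℝ => (x + s • (Pi.single i 1 : Fin N → ℝ)) j)
        ((Pi.single i 1 : Fin N → ℝ) j) 0 := by
      simpa using ((hasDerivAt_id (0 : ℝ)).mul_const
        ((Pi.single i 1 : Fin N → ℝ) j)).const_add (x j)
    have h := hp.mul hX
    simp only [map_mul, eval_X]
    refine HasDerivAt.congr_deriv h ?_
    by_cases hij : j = i
    · subst hij; simp [Derivation.leibniz]; ring
    · simp [Derivation.leibniz, hij, pderiv_X_of_ne hij]; ring

theorem hasLineDerivAt_weighted (N d : ℕ) (t : ℕ → ℝ) (P : MvPolynomial (Fin N) ℝ) (i : Fin N)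
    (x : Fin N → ℝ) :
    HasLineDerivAt ℝ (fun x => eval x P * wt N d t x)
      (eval x (pderiv i P - P * pderiv i (Wpoly N d t)) * wt N d t x) x (Pi.single i 1) := by
  simp only [wt_eq]
  have h1 := hasLineDerivAt_eval P i x
  have h2 := hasLineDerivAt_eval (Wpoly N d t) i x
  unfold HasLineDerivAt at *
  refine HasDerivAt.congr_deriv (h1.mul h2.neg.exp) ?_
  simp
  ring

theorem integral_deriv_eq_zero (N d : ℕ) (hd : Odd d) (t : ℕ → ℝ) (ht : 0 < t (d + 1))
    (P : MvPolynomial (Fin N) ℝ) (i : Fin N) :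
    ∫ x : Fin N → ℝ, eval x (pderiv i P - P * pderiv i (Wpoly N d t)) * wt N d t x = 0 := by
  have hP := integrable_poly N d hd t ht
  -- integration by parts against the constant function `1`
  have h := integral_bilinear_hasLineDerivAt_right_eq_neg_left_of_integrable
    (μ := (volume : Measure (Fin N → ℝ))) (B := ContinuousLinearMap.mul ℝ ℝ)
    (f := fun x => eval x P * wt N d t x)
    (f' := fun x => eval x (pderiv i P - P * pderiv i (Wpoly N d t)) * wt N d t x)
    (g := fun _ => 1) (g' := fun _ => 0) (v := Pi.single i 1)
    (by simpa using hP (pderiv i P - P * pderiv i (Wpoly N d t))) (by simp) (by simpa using hP P)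
    (fun x _ => hasLineDerivAt_weighted N d t P i x)
    (fun x _ => by simpa [HasLineDerivAt] using hasDerivAt_const (0 : ℝ) (1 : ℝ))
  simpa using h

/-! ### The derivation `∑ x_i ^ m ∂_i` -/

/-- The derivation `∑_i x_i ^ m ∂_i` of the polynomial ring. -/
noncomputable def D (N m : ℕ) : Derivation ℝ (MvPolynomial (Fin N) ℝ) (MvPolynomial (Fin N) ℝ) :=
  mkDerivation ℝ (fun i => X i ^ m)

theorem D_X (N m : ℕ) (i : Fin N) : D N m (X i) = X i ^ m := mkDerivation_X _ _ _

theorem D_eq_sum (N m : ℕ) (P : MvPolynomial (Fin N) ℝ) :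
    D N m P = ∑ i, X i ^ m * pderiv i P := by
  induction P using MvPolynomial.induction_on with
  | C a => simp [D]
  | add p q hp hq => simp [hp, hq, mul_add, Finset.sum_add_distrib]
  | mul_X p j hp =>
    simp only [Derivation.leibniz, hp, D_X, smul_eq_mul, mul_add, Finset.sum_add_distrib,
      Finset.mul_sum]
    congr 1
    · rw [Finset.sum_eq_single j]
      · simp; ring
      · intro b _ hb
        simp [pderiv_X_of_ne hb.symm]
      · simp
    · exact Finset.sum_congr rfl fun i _ => by ring

/-- The truncated subtraction is harmless: for `m = k = 0` the coefficient `k` vanishes. -/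
theorem D_psum (N m k : ℕ) :
    D N m (psum (Fin N) ℝ k) = C (k : ℝ) * psum (Fin N) ℝ (m + k - 1) := by
  simp only [psum, map_sum, Derivation.leibniz_pow, D_X, Finset.mul_sum]
  refine Finset.sum_congr rfl fun i _ => ?_
  rcases k with _ | k
  · simp
  · rw [show m + (k + 1) - 1 = k + m by omega, pow_add]
    simp

theorem D_W (N d m : ℕ) (t : ℕ → ℝ) :
    D N m (Wpoly N d t) = ∑ k ∈ Finset.range (d + 1), C (t (k + 1)) * psum (Fin N) ℝ (m + k) := by
  simp only [Wpoly, map_sum, Derivation.leibniz, D_psum]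
  refine Finset.sum_congr rfl fun k _ => ?_
  rw [show m + (k + 1) - 1 = m + k by omega]
  have h0 : D N m (C (t (k + 1) / (k + 1))) = 0 := by simp [D]
  rw [h0, smul_zero, add_zero, smul_eq_mul, ← mul_assoc, ← C_mul]
  congr 2
  push_cast
  field_simp

/-- `p_{μ₂} ⋯ p_{μ_n}` as a polynomial. -/
noncomputable def pL (N : ℕ) (μs : List ℕ) : MvPolynomial (Fin N) ℝ :=
  (μs.map (fun m => psum (Fin N) ℝ m)).prod

theorem D_pL (N m : ℕ) (μs : List ℕ) :
    D N m (pL N μs) = ∑ i : Fin μs.length,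
      C (μs.get i : ℝ) * psum (Fin N) ℝ (m + μs.get i - 1) * pL N (μs.eraseIdx i) := by
  induction μs with
  | nil => simp [pL]
  | cons a l ih =>
    have hcons : ∀ b (l' : List ℕ), pL N (b :: l') = psum (Fin N) ℝ b * pL N l' := by
      intro b l'; simp [pL]
    rw [hcons, Derivation.leibniz, ih, D_psum]
    simp only [List.length_cons]
    rw [Fin.sum_univ_succ]
    simp only [List.get_eq_getElem, Fin.val_succ, List.getElem_cons_succ, Fin.val_zero,
      List.getElem_cons_zero, List.eraseIdx_cons_succ, List.eraseIdx_cons_zero, hcons,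
      smul_eq_mul, Finset.mul_sum]
    rw [add_comm]
    congr 1
    · ring
    · exact Finset.sum_congr rfl fun i _ => by ring

/-- Logarithmic derivatives add up over a product. -/
theorem D_prod {N m : ℕ} {ι : Type*} (s : Finset ι) (f c : ι → MvPolynomial (Fin N) ℝ)
    (h : ∀ i ∈ s, D N m (f i) = c i * f i) :
    D N m (∏ i ∈ s, f i) = (∑ i ∈ s, c i) * ∏ i ∈ s, f i := by
  classical
  induction s using Finset.induction_on with
  | empty => simp
  | insert a s ha ih =>
    rw [Finset.prod_insert ha, Finset.sum_insert ha, Derivation.leibniz,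
      ih fun i hi => h i (Finset.mem_insert_of_mem hi), h a (Finset.mem_insert_self _ _)]
    simp only [smul_eq_mul]
    ring

/-- The Vandermonde determinant as a polynomial. -/
noncomputable def vdm (N : ℕ) : MvPolynomial (Fin N) ℝ :=
  ∏ i : Fin N, ∏ j ∈ Finset.Ioi i, (X i - X j)

/-- The complete homogeneous polynomial `(x_i ^ m - x_j ^ m) / (x_i - x_j)`. -/
noncomputable def hh (N m : ℕ) (i j : Fin N) : MvPolynomial (Fin N) ℝ :=
  ∑ l ∈ Finset.range m, X i ^ l * X j ^ (m - 1 - l)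

theorem hh_comm (N m : ℕ) (i j : Fin N) : hh N m i j = hh N m j i := by
  unfold hh
  rw [← Finset.sum_range_reflect]
  refine Finset.sum_congr rfl fun l hl => ?_
  have := Finset.mem_range.1 hl
  rw [show m - 1 - (m - 1 - l) = l by omega, mul_comm]

theorem D_vdm (N m : ℕ) :
    D N m (vdm N) = (∑ i : Fin N, ∑ j ∈ Finset.Ioi i, hh N m i j) * vdm N := by
  refine D_prod _ _ _ fun i _ => D_prod _ _ _ fun j _ => ?_
  rw [map_sub, D_X, D_X, hh, (Commute.all (X i) (X j)).geom_sum₂_mul]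

theorem sum_hh (N m : ℕ) :
    2 * ∑ i : Fin N, ∑ j ∈ Finset.Ioi i, hh N m i j + C (m : ℝ) * psum (Fin N) ℝ (m - 1)
      = ∑ l ∈ Finset.range m, psum (Fin N) ℝ l * psum (Fin N) ℝ (m - 1 - l) := by
  have hfull : ∑ l ∈ Finset.range m, psum (Fin N) ℝ l * psum (Fin N) ℝ (m - 1 - l)
      = ∑ i : Fin N, ∑ j : Fin N, hh N m i j := by
    simp only [psum, hh, Finset.sum_mul_sum]
    rw [Finset.sum_comm]
    exact Finset.sum_congr rfl fun i _ => Finset.sum_comm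
  have hdiag : C (m : ℝ) * psum (Fin N) ℝ (m - 1) = ∑ i : Fin N, hh N m i i := by
    simp only [psum, hh, Finset.mul_sum]
    refine Finset.sum_congr rfl fun i _ => ?_
    have : ∀ l ∈ Finset.range m, (X i : MvPolynomial (Fin N) ℝ) ^ l * X i ^ (m - 1 - l)
        = X i ^ (m - 1) := fun l hl => by
      have := Finset.mem_range.1 hl
      rw [← pow_add, show l + (m - 1 - l) = m - 1 by omega]
    rw [Finset.sum_congr rfl this]
    simp
  have hlow : ∑ i : Fin N, ∑ j ∈ Finset.Iio i, hh N m i j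
      = ∑ i : Fin N, ∑ j ∈ Finset.Ioi i, hh N m i j := by
    rw [Finset.sum_comm' (t' := Finset.univ) (s' := fun j => Finset.Ioi j) (by simp)]
    exact Finset.sum_congr rfl fun i _ => Finset.sum_congr rfl fun j _ => hh_comm N m j i
  have hsplit : ∀ i : Fin N, ∑ j : Fin N, hh N m i j
      = ∑ j ∈ Finset.Iio i, hh N m i j + hh N m i i + ∑ j ∈ Finset.Ioi i, hh N m i j := by
    intro i
    have hu : (Finset.univ : Finset (Fin N)) = insert i (Finset.Iio i ∪ Finset.Ioi i) := by
      ext j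
      simp only [Finset.mem_univ, Finset.mem_insert, Finset.mem_union, Finset.mem_Iio,
        Finset.mem_Ioi, true_iff]
      rcases lt_trichotomy j i with h | h | h <;> simp [h]
    rw [hu, Finset.sum_insert (by simp), Finset.sum_union]
    · ring
    · rw [Finset.disjoint_left]
      intro j hj hj'
      exact lt_asymm (Finset.mem_Iio.1 hj) (Finset.mem_Ioi.1 hj')
  rw [hfull, hdiag, Finset.sum_congr rfl fun i _ => hsplit i, Finset.sum_add_distrib,
    Finset.sum_add_distrib, hlow]
  ring

/-! ### The loop polynomial as a divergence -/

/-- The loop-equation polynomial `Q_μ` as an element of `MvPolynomial (Fin N) ℝ`. -/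
noncomputable def Qp (N d : ℕ) (t : ℕ → ℝ) (m : ℕ) (μs : List ℕ) : MvPolynomial (Fin N) ℝ :=
  (∑ j ∈ Finset.range (d + 1), C (t (j + 1)) * psum (Fin N) ℝ (m + j) * pL N μs)
  - (∑ j ∈ Finset.range m, psum (Fin N) ℝ j * psum (Fin N) ℝ (m - 1 - j) * pL N μs)
  - (∑ i : Fin μs.length,
      C (μs.get i : ℝ) * psum (Fin N) ℝ (m + μs.get i - 1) * pL N (μs.eraseIdx i))

theorem eval_pL (N : ℕ) (μs : List ℕ) (x : Fin N → ℝ) : eval x (pL N μs) = pListR N μs x := by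
  simp only [pL, pListR, map_list_prod, List.map_map]
  congr 1
  exact List.map_congr_left fun k _ => eval_psum N k x

theorem eval_Qp (N d : ℕ) (t : ℕ → ℝ) (m : ℕ) (μs : List ℕ) (x : Fin N → ℝ) :
    eval x (Qp N d t m μs * vdm N ^ 2) = QloopFnR N d t m μs x * vdmR N x ^ 2 := by
  simp only [Qp, QloopFnR, vdm, vdmR, map_mul, map_sub, map_sum, map_pow, map_prod, eval_C,
    eval_X, eval_psum, eval_pL]

theorem divergence (N d : ℕ) (t : ℕ → ℝ) (m : ℕ) (μs : List ℕ) :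
    ∑ i : Fin N, (pderiv i (X i ^ m * (pL N μs * vdm N ^ 2))
      - X i ^ m * (pL N μs * vdm N ^ 2) * pderiv i (Wpoly N d t))
      = - (Qp N d t m μs * vdm N ^ 2) := by
  have h1 : ∀ G : MvPolynomial (Fin N) ℝ,
      ∑ i : Fin N, (pderiv i (X i ^ m * G) - X i ^ m * G * pderiv i (Wpoly N d t))
        = C (m : ℝ) * psum (Fin N) ℝ (m - 1) * G + D N m G - G * D N m (Wpoly N d t) := by
    intro G
    simp only [D_eq_sum, psum, Finset.mul_sum, Finset.sum_mul]
    rw [← Finset.sum_add_distrib, ← Finset.sum_sub_distrib]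
    refine Finset.sum_congr rfl fun i _ => ?_
    simp [Derivation.leibniz, Derivation.leibniz_pow]
    ring
  rw [h1, Derivation.leibniz, Derivation.leibniz_pow, D_vdm, D_W, D_pL]
  simp only [Qp, ← Finset.sum_mul, ← sum_hh, smul_eq_mul, nsmul_eq_mul]
  push_cast
  ring

end LoopEq

theorem stmt7 (N d : ℕ) (hN : 1 ≤ N) (hdodd : Odd d) (t : ℕ → ℝ)
    (ht : 0 < t (d + 1)) (μ₁ : ℕ) (μs : List ℕ) :
    Integrable (fun x : Fin N → ℝ =>
      QloopFnR N d t μ₁ μs x * vdmR N x ^ 2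
        * Real.exp (- ∑ a : Fin N, VpotR d t (x a))) volume
    ∧ ∫ x : Fin N → ℝ,
        QloopFnR N d t μ₁ μs x * vdmR N x ^ 2
          * Real.exp (- ∑ a : Fin N, VpotR d t (x a)) = 0 := by
  have hP := LoopEq.integrable_poly N d hdodd t ht
  have hEq : ∀ x : Fin N → ℝ, QloopFnR N d t μ₁ μs x * vdmR N x ^ 2
      * Real.exp (- ∑ a : Fin N, VpotR d t (x a))
      = MvPolynomial.eval x (LoopEq.Qp N d t μ₁ μs * LoopEq.vdm N ^ 2) * LoopEq.wt N d t x :=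
    fun x => by rw [LoopEq.eval_Qp, LoopEq.wt]
  simp only [hEq]
  refine ⟨hP _, ?_⟩
  have hneg : ∀ x : Fin N → ℝ,
      MvPolynomial.eval x (LoopEq.Qp N d t μ₁ μs * LoopEq.vdm N ^ 2) * LoopEq.wt N d t x
      = - ∑ i : Fin N, MvPolynomial.eval x
        (MvPolynomial.pderiv i (MvPolynomial.X i ^ μ₁ * (LoopEq.pL N μs * LoopEq.vdm N ^ 2))
          - MvPolynomial.X i ^ μ₁ * (LoopEq.pL N μs * LoopEq.vdm N ^ 2)
            * MvPolynomial.pderiv i (LoopEq.Wpoly N d t)) * LoopEq.wt N d t x := fun x => by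
    rw [← Finset.sum_mul, ← map_sum, LoopEq.divergence, map_neg, neg_mul, neg_neg]
  simp only [hneg]
  rw [integral_neg, integral_finsetSum _ fun i _ => hP _,
    Finset.sum_eq_zero fun i _ => LoopEq.integral_deriv_eq_zero N d hdodd t ht _ i, neg_zero]
end

section
/- Let N ≥ 1, let V be a real polynomial of even degree ≥ 2 with positive leading coefficient, and write 𝔼(f) = ∫_{ℝ^N} f(x) Δ(x)² e^{−Σ_{a=1}^N V(x_a)} dx for the unnormalized expectation. Then 𝔼(Σ_{i=1}^N V'(x_i)) = 0, and for every integer k ≥ 1, 𝔼(Σ_{i=1}^N x_i^k V'(x_i)) = Σ_{j=0}^{k−1} 𝔼( (Σ_{i=1}^N x_i^j)(Σ_{i=1}^N x_i^{k−j−1}) ), where Σ_{i=1}^N x_i^0 is interpreted as the constant N. -/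
/-!
The identity is integration by parts against the weight `e^{-W}`, `W = ∑ₐ V(xₐ)`, applied to the
vector field `x ↦ (x_i ^ k Δ²)_i`.

For every multivariate polynomial `p`, the function `p e^{-W}` is integrable
(`integrable_eval_mul_exp`: by Fubini this reduces to the moments of `e^{-V}` on the line, finite
because `V` outgrows `|x|` at both ends), so `∫ (∂_i p - p V'(x_i)) e^{-W} = 0`
(`integral_pderiv_sub`). Taking `p = x_i ^ k Δ²` and summing over `i`, it remains to compute the
divergence `∑_i ∂_i (x_i ^ k Δ²)`, which is an identity between polynomials
(`sum_pderiv_X_pow_mul_vdm_sq`). The derivation `D = ∑_i x_i ^ k ∂_i` multiplies each factor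
`x_i - x_j` of `Δ` by `h(i, j) = ∑_{m < k} x_i ^ m x_j ^ (k - 1 - m)`, so that
`D Δ² = Δ² · 2 ∑_{i < j} h(i, j)`. As `h` is symmetric and `h(i, i) = k x_i ^ (k - 1)`, adding the
terms `k x_i ^ (k - 1) Δ²` completes the sum to all pairs `(i, j)`, and
`∑_{i, j} h(i, j) = ∑_{m < k} (∑_i x_i ^ m) (∑_j x_j ^ (k - 1 - m))`. For `k = 0` the last sum is
empty, so both assertions of the theorem are instances of the same identity.
-/

open Finset MeasureTheory Polynomial

/-- The weight `Δ(x)² e^{-∑_a V(x_a)}`. -/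
noncomputable def wtV (N : ℕ) (V : Polynomial ℝ) (x : Fin N → ℝ) : ℝ :=
  vdmR N x ^ 2 * Real.exp (- ∑ a : Fin N, V.eval (x a))

/-! ### Integrability -/

/-- Half-line moments of `e^{-V}`: since `V(x) - x → ∞`, the integrand is `O(e^{-x/2})`. -/
lemma integrableOn_Ioi_pow_mul_exp (V : Polynomial ℝ) (hdeg : 2 ≤ V.natDegree)
    (hlead : 0 < V.leadingCoeff) (m : ℕ) :
    IntegrableOn (fun x : ℝ => x ^ m * Real.exp (-V.eval x)) (Set.Ioi 0) := by
  have hV : V.degree = V.natDegree :=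
    Polynomial.degree_eq_natDegree (by rintro rfl; simp at hdeg)
  have hlt : (Polynomial.X : ℝ[X]).degree < V.degree := by
    rw [Polynomial.degree_X, hV]; exact_mod_cast hdeg
  have h1 : Filter.Tendsto (fun x => (V - Polynomial.X).eval x) Filter.atTop Filter.atTop := by
    apply Polynomial.tendsto_atTop_of_leadingCoeff_nonneg
    · rw [Polynomial.degree_sub_eq_left_of_degree_lt hlt, hV]
      exact_mod_cast (by omega : 0 < V.natDegree)
    · rw [Polynomial.leadingCoeff_sub_of_degree_lt hlt]; exact hlead.le
  refine integrable_of_isBigO_exp_neg (b := 1 / 2) (by norm_num) (by fun_prop) ?_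
  have h2 : (fun x : ℝ => Real.exp (-V.eval x)) =O[Filter.atTop] fun x => Real.exp (-x) := by
    refine Asymptotics.IsBigO.of_bound 1 ?_
    filter_upwards [h1.eventually_ge_atTop 0] with x hx
    simp only [Polynomial.eval_sub, Polynomial.eval_X] at hx
    simp only [Real.norm_eq_abs, Real.abs_exp, one_mul, Real.exp_le_exp]
    linarith
  have h3 := (isLittleO_pow_exp_pos_mul_atTop m (b := 1 / 2) (by norm_num)).isBigO.mul h2
  refine h3.congr_right fun x => ?_
  rw [← Real.exp_add]
  ring_nf

lemma integrable_pow_mul_exp (V : Polynomial ℝ) (hdeg : 2 ≤ V.natDegree)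
    (heven : Even V.natDegree) (hlead : 0 < V.leadingCoeff) (m : ℕ) :
    Integrable (fun x : ℝ => x ^ m * Real.exp (-V.eval x)) := by
  rw [← integrableOn_univ, ← Set.Iic_union_Ioi (a := (0 : ℝ))]
  refine IntegrableOn.union ?_ (integrableOn_Ioi_pow_mul_exp V hdeg hlead m)
  -- The reflected polynomial `V(-x)` has the same degree and, that degree being even, the same
  -- leading coefficient.
  have h1 : (V.comp (-Polynomial.X)).natDegree = V.natDegree := by
    simp [Polynomial.natDegree_comp]
  have h2 : (V.comp (-Polynomial.X)).leadingCoeff = V.leadingCoeff := by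
    rw [Polynomial.leadingCoeff_comp (by simp)]
    simp [heven.neg_one_pow]
  have h3 : IntegrableOn (fun x : ℝ => (-1) ^ m *
      (x ^ m * Real.exp (-(V.comp (-Polynomial.X)).eval x))) (Set.Ioi 0) :=
    (integrableOn_Ioi_pow_mul_exp (V.comp (-Polynomial.X)) (by rw [h1]; exact hdeg)
      (by rw [h2]; exact hlead) m).const_mul ((-1) ^ m)
  rw [← neg_zero, ← integrableOn_Ici_iff_integrableOn_Ioi] at h3
  have h4 := h3.comp_neg_Iic
  refine h4.congr_fun (fun x _ => ?_) measurableSet_Iic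
  simp only [Polynomial.eval_comp, Polynomial.eval_neg, Polynomial.eval_X, neg_neg]
  rw [← mul_assoc, ← mul_pow, neg_one_mul, neg_neg]

/-- The total potential `∑ₐ V(xₐ)` as a multivariate polynomial. -/
noncomputable def potential (N : ℕ) (V : Polynomial ℝ) : MvPolynomial (Fin N) ℝ :=
  ∑ a, Polynomial.aeval (MvPolynomial.X a) V

lemma eval_aeval_X {N : ℕ} (V : Polynomial ℝ) (x : Fin N → ℝ) (a : Fin N) :
    MvPolynomial.eval x (Polynomial.aeval (MvPolynomial.X a) V) = V.eval (x a) := by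
  have := Polynomial.hom_eval₂ V (algebraMap ℝ (MvPolynomial (Fin N) ℝ))
    (MvPolynomial.eval x) (MvPolynomial.X a)
  rw [Polynomial.aeval_def, this, MvPolynomial.eval_X]
  have h : (MvPolynomial.eval x).comp (algebraMap ℝ (MvPolynomial (Fin N) ℝ)) = RingHom.id ℝ := by
    ext; simp [MvPolynomial.algebraMap_eq]
  rw [h, Polynomial.eval₂_id]

lemma eval_potential {N : ℕ} (V : Polynomial ℝ) (x : Fin N → ℝ) :
    MvPolynomial.eval x (potential N V) = ∑ a, V.eval (x a) := by
  simp [potential, eval_aeval_X]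

lemma integrable_eval_mul_exp {N : ℕ} (V : Polynomial ℝ) (hdeg : 2 ≤ V.natDegree)
    (heven : Even V.natDegree) (hlead : 0 < V.leadingCoeff) (p : MvPolynomial (Fin N) ℝ) :
    Integrable (fun x : Fin N → ℝ =>
      MvPolynomial.eval x p * Real.exp (-MvPolynomial.eval x (potential N V))) := by
  induction p using MvPolynomial.induction_on' with
  | monomial u a =>
    have h := (Integrable.fintype_prod (f := fun (i : Fin N) (y : ℝ) =>
      y ^ u i * Real.exp (-V.eval y)) (μ := fun _ => volume)
      (fun i => integrable_pow_mul_exp V hdeg heven hlead (u i))).const_mul a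
    refine h.congr (Filter.Eventually.of_forall fun x => ?_)
    simp only [Finset.prod_mul_distrib, eval_potential, MvPolynomial.eval_monomial,
      ← Real.exp_sum, Finset.sum_neg_distrib]
    rw [Finsupp.prod_fintype _ _ (by simp), mul_assoc]
  | add p q hp hq =>
    simp only [map_add, add_mul]
    exact hp.add hq

/-! ### Integration by parts -/

lemma hasLineDerivAt_eval {N : ℕ} (p : MvPolynomial (Fin N) ℝ) (x : Fin N → ℝ) (i : Fin N) :
    HasLineDerivAt ℝ (fun y => MvPolynomial.eval y p)
      (MvPolynomial.eval x (MvPolynomial.pderiv i p)) x (Pi.single i 1) := by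
  induction p using MvPolynomial.induction_on with
  | C a => simpa [HasLineDerivAt] using hasDerivAt_const (0 : ℝ) a
  | add p q hp hq =>
    simp only [map_add]
    exact HasDerivAt.add hp hq
  | mul_X p j hp =>
    have hX : HasDerivAt (fun t : ℝ => x j + t * (Pi.single i 1 : Fin N → ℝ) j)
        ((Pi.single i 1 : Fin N → ℝ) j) 0 := by
      simpa using ((hasDerivAt_id (0 : ℝ)).mul_const ((Pi.single i 1 : Fin N → ℝ) j)).const_add
        (x j)
    have h := HasDerivAt.mul (show HasDerivAt _ _ _ from hp) hX
    unfold HasLineDerivAt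
    convert! h using 1
    · funext t; simp
    · by_cases hij : j = i
      · subst hij; simp [Derivation.leibniz, MvPolynomial.pderiv_X]; ring
      · simp [Derivation.leibniz, MvPolynomial.pderiv_X, hij, mul_comm]

lemma pderiv_potential {N : ℕ} (V : Polynomial ℝ) (i : Fin N) :
    MvPolynomial.pderiv i (potential N V)
      = Polynomial.aeval (MvPolynomial.X i) V.derivative := by
  simp only [potential, map_sum, Derivation.map_aeval, MvPolynomial.pderiv_X]
  rw [Finset.sum_eq_single i]
  · simp
  · intro j _ hj; simp [hj]
  · simp

/-- The divergence identity `∫ ∂_i (p e^{-W}) = 0`. -/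
lemma integral_pderiv_sub {N : ℕ} (V : Polynomial ℝ) (hdeg : 2 ≤ V.natDegree)
    (heven : Even V.natDegree) (hlead : 0 < V.leadingCoeff) (p : MvPolynomial (Fin N) ℝ)
    (i : Fin N) :
    ∫ x : Fin N → ℝ, MvPolynomial.eval x (MvPolynomial.pderiv i p
        - p * Polynomial.aeval (MvPolynomial.X i) V.derivative)
      * Real.exp (-MvPolynomial.eval x (potential N V)) = 0 := by
  have hInt := integrable_eval_mul_exp (N := N) V hdeg heven hlead
  -- Integrating by parts against the constant function `1` leaves the integral of the derivative.
  have h := integral_bilinear_hasLineDerivAt_right_eq_neg_left_of_integrable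
    (μ := (volume : Measure (Fin N → ℝ))) (v := Pi.single i 1)
    (B := ContinuousLinearMap.mul ℝ ℝ)
    (f := fun x => MvPolynomial.eval x p * Real.exp (-MvPolynomial.eval x (potential N V)))
    (f' := fun x => MvPolynomial.eval x (MvPolynomial.pderiv i p
        - p * Polynomial.aeval (MvPolynomial.X i) V.derivative)
      * Real.exp (-MvPolynomial.eval x (potential N V)))
    (g := fun _ => 1) (g' := fun _ => 0)
    (by simpa only [ContinuousLinearMap.mul_apply', mul_one] using hInt _)
    (by simp)
    (by simpa only [ContinuousLinearMap.mul_apply', mul_one] using hInt _)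
    (fun x _ => by
      have h1 : HasDerivAt _ _ _ := hasLineDerivAt_eval p x i
      have h2 : HasDerivAt _ _ _ := hasLineDerivAt_eval (potential N V) x i
      have h3 := h1.mul h2.neg.exp
      unfold HasLineDerivAt
      convert! h3 using 1
      simp [pderiv_potential]
      ring)
    (fun x _ => hasDerivAt_const (0 : ℝ) (1 : ℝ))
  simpa using h.symm

/-! ### The divergence of `x_i ^ k Δ²` -/

/-- A derivation that multiplies each factor by `c i` multiplies the product by `∑ c i`: the
logarithmic derivative of a product, without division. -/
lemma derivation_prod {A ι : Type*} [CommRing A] [Algebra ℝ A] (D : Derivation ℝ A A)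
    (s : Finset ι) (f c : ι → A) (h : ∀ i ∈ s, D (f i) = f i * c i) :
    D (∏ i ∈ s, f i) = (∏ i ∈ s, f i) * ∑ i ∈ s, c i := by
  classical
  induction s using Finset.induction_on with
  | empty => simp
  | insert a s ha ih =>
    rw [Finset.prod_insert ha, Finset.sum_insert ha, Derivation.leibniz,
      ih fun i hi => h i (Finset.mem_insert_of_mem hi), h a (Finset.mem_insert_self a s)]
    simp only [smul_eq_mul]
    ring

/-- The Vandermonde determinant as a multivariate polynomial. -/
noncomputable def vdmPoly (N : ℕ) : MvPolynomial (Fin N) ℝ :=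
  ∏ i : Fin N, ∏ j ∈ Finset.Ioi i, (MvPolynomial.X i - MvPolynomial.X j)

lemma eval_vdmPoly (N : ℕ) (x : Fin N → ℝ) : MvPolynomial.eval x (vdmPoly N) = vdmR N x := by
  simp [vdmPoly, vdmR, map_prod]

lemma sum_symm_eq {N : ℕ} {A : Type*} [CommRing A] (h : Fin N → Fin N → A)
    (hs : ∀ i j, h i j = h j i) :
    2 * ∑ i, ∑ j ∈ Finset.Ioi i, h i j + ∑ i, h i i = ∑ i, ∑ j, h i j := by
  have h1 : ∀ i, ∑ j, h i j
      = ∑ j ∈ Finset.Iio i, h i j + h i i + ∑ j ∈ Finset.Ioi i, h i j := by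
    intro i
    have e1 : (Finset.univ : Finset (Fin N)) = (Finset.Iio i ∪ {i}) ∪ Finset.Ioi i := by
      ext j; simp; grind
    rw [e1, Finset.sum_union, Finset.sum_union, Finset.sum_singleton]
    · simp
    · rw [Finset.disjoint_left]; intro j
      simp only [Finset.mem_union, Finset.mem_Iio, Finset.mem_singleton, Finset.mem_Ioi]
      grind
  have h2 : ∑ i, ∑ j ∈ Finset.Iio i, h i j = ∑ i, ∑ j ∈ Finset.Ioi i, h i j := by
    rw [Finset.sum_comm' (t' := Finset.univ) (s' := fun j => Finset.Ioi j) (by simp)]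
    exact Finset.sum_congr rfl fun i _ => Finset.sum_congr rfl fun j _ => hs _ _
  simp only [h1, Finset.sum_add_distrib, h2]
  ring

lemma derivation_sum_apply {A ι : Type*} [CommRing A] [Algebra ℝ A] (s : Finset ι)
    (D : ι → Derivation ℝ A A) (a : A) : (∑ i ∈ s, D i) a = ∑ i ∈ s, D i a := by
  classical
  induction s using Finset.induction_on with
  | empty => simp
  | insert i s hi ih => rw [Finset.sum_insert hi, Finset.sum_insert hi, Derivation.add_apply, ih]

lemma sum_pderiv_X_pow_mul_vdm_sq (N k : ℕ) :
    ∑ i : Fin N, MvPolynomial.pderiv i (MvPolynomial.X i ^ k * vdmPoly N ^ 2)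
      = ∑ m ∈ Finset.range k, (∑ i : Fin N, MvPolynomial.X i ^ m)
          * (∑ i : Fin N, MvPolynomial.X i ^ (k - m - 1)) * vdmPoly N ^ 2 := by
  let D : Derivation ℝ (MvPolynomial (Fin N) ℝ) (MvPolynomial (Fin N) ℝ) :=
    MvPolynomial.mkDerivation ℝ fun i => MvPolynomial.X i ^ k
  have hD : ∀ q, D q = ∑ i : Fin N, MvPolynomial.X i ^ k * MvPolynomial.pderiv i q := by
    intro q
    have : D = ∑ i : Fin N, (MvPolynomial.X i ^ k : MvPolynomial (Fin N) ℝ) •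
        MvPolynomial.pderiv i := by
      apply MvPolynomial.derivation_ext
      intro j
      simp [D, MvPolynomial.mkDerivation_X, derivation_sum_apply, MvPolynomial.pderiv_X,
        Pi.single_apply]
    rw [this]
    simp [derivation_sum_apply]
  let h : Fin N → Fin N → MvPolynomial (Fin N) ℝ := fun i j =>
    ∑ m ∈ Finset.range k, MvPolynomial.X i ^ m * MvPolynomial.X j ^ (k - 1 - m)
  have hs : ∀ i j, h i j = h j i := by
    intro i j
    simp only [h]
    rw [← Finset.sum_range_reflect]
    refine Finset.sum_congr rfl fun m hm => ?_
    rw [Finset.mem_range] at hm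
    rw [mul_comm, show k - 1 - (k - 1 - m) = m by omega]
  have hdiag : ∀ i, h i i = (k : MvPolynomial (Fin N) ℝ) * MvPolynomial.X i ^ (k - 1) := by
    intro i
    simp only [h]
    rw [Finset.sum_congr rfl (g := fun _ => MvPolynomial.X i ^ (k - 1))]
    · simp
    · intro m hm
      rw [Finset.mem_range] at hm
      rw [← pow_add, show m + (k - 1 - m) = k - 1 by omega]
  have hvdm : D (vdmPoly N) = vdmPoly N * ∑ i, ∑ j ∈ Finset.Ioi i, h i j := by
    unfold vdmPoly
    refine derivation_prod D _ _ _ fun i _ => derivation_prod D _ _ _ fun j _ => ?_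
    rw [map_sub, mul_comm (_ - _)]
    simp only [D, MvPolynomial.mkDerivation_X, h]
    exact (geom_sum₂_mul _ _ _).symm
  have hsum : ∑ i, ∑ j, h i j = ∑ m ∈ Finset.range k, (∑ i : Fin N, MvPolynomial.X i ^ m)
      * (∑ i : Fin N, MvPolynomial.X i ^ (k - m - 1)) := by
    simp only [h, Finset.sum_mul_sum]
    simp only [Finset.sum_comm (s := Finset.univ) (t := Finset.range k), Nat.sub_right_comm k 1]
  rw [← Finset.sum_mul, ← hsum, ← sum_symm_eq h hs]
  have hl : ∀ i : Fin N, MvPolynomial.pderiv i (MvPolynomial.X i ^ k * vdmPoly N ^ 2)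
      = MvPolynomial.X i ^ k * MvPolynomial.pderiv i (vdmPoly N ^ 2)
        + h i i * vdmPoly N ^ 2 := by
    intro i
    rw [Derivation.leibniz, Derivation.leibniz_pow (a := MvPolynomial.X i), hdiag]
    simp
    ring
  simp only [hl, Finset.sum_add_distrib]
  rw [← hD, ← Finset.sum_mul, sq, Derivation.leibniz, hvdm]
  simp only [smul_eq_mul]
  ring

/-- The moment identity for every `k`; at `k = 0` the right-hand side is an empty sum. -/
lemma loop_equation (N : ℕ) (V : Polynomial ℝ) (hdeg : 2 ≤ V.natDegree)
    (heven : Even V.natDegree) (hlead : 0 < V.leadingCoeff) (k : ℕ) :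
    (∫ x : Fin N → ℝ, (∑ i : Fin N, (x i) ^ k * V.derivative.eval (x i)) * wtV N V x)
      = ∑ j ∈ Finset.range k,
          ∫ x : Fin N → ℝ,
            (∑ i : Fin N, (x i) ^ j) * (∑ i : Fin N, (x i) ^ (k - j - 1)) * wtV N V x := by
  have hInt := integrable_eval_mul_exp (N := N) V hdeg heven hlead
  have hR : ∀ j, ∀ x : Fin N → ℝ,
      (∑ i : Fin N, (x i) ^ j) * (∑ i : Fin N, (x i) ^ (k - j - 1)) * wtV N V x
      = MvPolynomial.eval x ((∑ i : Fin N, MvPolynomial.X i ^ j)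
          * (∑ i : Fin N, MvPolynomial.X i ^ (k - j - 1)) * vdmPoly N ^ 2)
        * Real.exp (-MvPolynomial.eval x (potential N V)) := by
    intro j x
    simp [wtV, eval_vdmPoly, eval_potential]
    ring
  have hL : ∀ x : Fin N → ℝ,
      (∑ i : Fin N, (x i) ^ k * V.derivative.eval (x i)) * wtV N V x
      = MvPolynomial.eval x (∑ i : Fin N, MvPolynomial.X i ^ k * vdmPoly N ^ 2
          * Polynomial.aeval (MvPolynomial.X i) V.derivative)
        * Real.exp (-MvPolynomial.eval x (potential N V)) := by
    intro x
    simp only [wtV, map_sum, map_mul, map_pow, MvPolynomial.eval_X, eval_vdmPoly, eval_potential,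
      eval_aeval_X, Finset.sum_mul]
    exact Finset.sum_congr rfl fun i _ => by ring
  simp only [hR, hL]
  rw [← integral_finsetSum _ fun j _ => hInt _]
  simp only [← Finset.sum_mul, ← map_sum]
  rw [Finset.sum_mul, ← sum_pderiv_X_pow_mul_vdm_sq, eq_comm, ← sub_eq_zero,
    ← integral_sub (hInt _) (hInt _)]
  simp only [← sub_mul, ← map_sub, ← Finset.sum_sub_distrib]
  simp only [map_sum, Finset.sum_mul]
  rw [integral_finsetSum _ fun i _ => hInt _]
  exact Finset.sum_eq_zero fun i _ => integral_pderiv_sub V hdeg heven hlead _ i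

theorem stmt8 (N : ℕ) (hN : 1 ≤ N) (V : Polynomial ℝ)
    (hdeg : 2 ≤ V.natDegree) (heven : Even V.natDegree)
    (hlead : 0 < V.leadingCoeff) :
    (∫ x : Fin N → ℝ, (∑ i : Fin N, V.derivative.eval (x i)) * wtV N V x) = 0
    ∧ ∀ k : ℕ, 1 ≤ k →
      (∫ x : Fin N → ℝ, (∑ i : Fin N, (x i) ^ k * V.derivative.eval (x i)) * wtV N V x)
      = ∑ j ∈ Finset.range k,
          ∫ x : Fin N → ℝ,
            (∑ i : Fin N, (x i) ^ j) * (∑ i : Fin N, (x i) ^ (k - j - 1)) * wtV N V x := by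
  refine ⟨?_, fun k _ => loop_equation N V hdeg heven hlead k⟩
  simpa using loop_equation N V hdeg heven hlead 0
end

section
/- Let N ≥ 1, let d, d̃ ≥ 1 with d·d̃ ≥ 2, and let t_1,…,t_{d+1}, t̃_1,…,t̃_{d̃+1} ∈ ℂ with t_{d+1} ≠ 0 and t̃_{d̃+1} ≠ 0. Then for every k ≥ 0 and every tuple (μ_2,…,μ_n) of nonnegative integers, the two-matrix loop-equation polynomial satisfies: Q_{k;μ_2,…,μ_n} − t̃_{d̃+1}·(t_{d+1})^{d̃} · p_{k+d·d̃} p_{μ_2}⋯p_{μ_n} lies in the ℂ-span of {p_ν : ν a tuple of nonnegative integers with |ν| < k + d·d̃ + μ_2 + ⋯ + μ_n}. -/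
/-!
Filter `P_N` by weight: let `V n` be the span of the `p_ν` with `|ν| < n`. Each application of the
recursion to `F^{(l)}` multiplies the top weight term by `t_{d+1}` and raises its weight by `d`,
through the summand `j = d`; the summands with `j < d`, the splitting sum and the joining sum all
contribute only lower weights (the last two even lower the weight by `1`). By
induction on `l`, `F^{(l)}_{k;μ} ≡ t_{d+1}^l p_{k+dl} p_μ` modulo `V (k + dl + |μ|)` (`F2_sub_mem`).
In `Q` only the summand `l = dt` reaches weight `k + d·dt + |μ|`, because `d ≥ 1`, and the term
`p_{k+1} p_μ` has lower weight because `d·dt ≥ 2`.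
-/

set_option synthInstance.maxHeartbeats 1000000
set_option maxHeartbeats 1000000
open MvPolynomial Finset

/-- The space `P_N` of symmetric polynomials in `N` variables over `ℂ`. -/
abbrev SymPoly (N : ℕ) : Type := MvPolynomial.symmetricSubalgebra (Fin N) ℂ

/-- The `k`-th power sum `p_k = ∑ x_i^k` as an element of `P_N`. -/
noncomputable def pPow (N k : ℕ) : SymPoly N :=
  ⟨MvPolynomial.psum (Fin N) ℂ k,
    (MvPolynomial.mem_symmetricSubalgebra _).2 (MvPolynomial.psum_isSymmetric _ _ k)⟩

/-- `p_μ = p_{μ₁} ⋯ p_{μ_n}` for a tuple `μ` of nonnegative integers (given as a list). -/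
noncomputable def pProd (N : ℕ) (μ : List ℕ) : SymPoly N :=
  (μ.map (pPow N)).prod


/-- The auxiliary symmetric polynomials `F^{(l)}_{k; μs}` of the two-matrix model. -/
noncomputable def F2 (N d : ℕ) (t : ℕ → ℂ) : ℕ → ℕ → List ℕ → SymPoly N
  | 0, k, μs => pPow N k * pProd N μs
  | l + 1, k, μs =>
      (∑ j ∈ Finset.range (d + 1), t (j + 1) • F2 N d t l (k + j) μs)
      - (∑ j ∈ Finset.range k, F2 N d t l j ((k - 1 - j) :: μs))
      - (∑ i : Fin μs.length,
          (μs.get i : ℂ) • F2 N d t l (k + μs.get i - 1) (μs.eraseIdx i))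

/-- The two-matrix loop-equation polynomial `Q_{k; μs}`. -/
noncomputable def Q2 (N d dt : ℕ) (t tt : ℕ → ℂ) (k : ℕ) (μs : List ℕ) : SymPoly N :=
  (∑ l ∈ Finset.range (dt + 1), tt (l + 1) • F2 N d t l k μs)
  - pPow N (k + 1) * pProd N μs

/-- The span of the power sum products `p_ν` of weight `|ν| < n`. -/
noncomputable def lowWeight (N n : ℕ) : Submodule ℂ (SymPoly N) :=
  Submodule.span ℂ {w : SymPoly N | ∃ ν : List ℕ, ν.sum < n ∧ w = pProd N ν}

lemma lowWeight_mono {N m n : ℕ} (h : m ≤ n) : lowWeight N m ≤ lowWeight N n := by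
  refine Submodule.span_mono ?_
  rintro w ⟨ν, hν, rfl⟩
  exact ⟨ν, hν.trans_le h, rfl⟩

lemma pPow_mul_pProd_mem {N k n : ℕ} {μs : List ℕ} (h : k + μs.sum < n) :
    pPow N k * pProd N μs ∈ lowWeight N n :=
  Submodule.subset_span ⟨k :: μs, by simpa using h, by simp [pProd]⟩

lemma get_add_sum_eraseIdx (μs : List ℕ) (i : Fin μs.length) :
    μs.get i + (μs.eraseIdx i).sum = μs.sum := by
  simp

/-- The recursion for `F^{(l)}` has top weight term `t_{d+1}^l p_{k+dl} p_μ`. -/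
lemma F2_sub_mem {N d : ℕ} (hd : 1 ≤ d) (t : ℕ → ℂ) (l : ℕ) : ∀ (k : ℕ) (μs : List ℕ),
    F2 N d t l k μs - t (d + 1) ^ l • (pPow N (k + d * l) * pProd N μs)
      ∈ lowWeight N (k + d * l + μs.sum) := by
  induction l with
  | zero => intro k μs; simp [F2]
  | succ l ih =>
    have hF : ∀ (k : ℕ) (μs : List ℕ) (n : ℕ), k + d * l + μs.sum < n →
        F2 N d t l k μs ∈ lowWeight N n := by
      intro k μs n hn
      have h := add_mem (lowWeight_mono hn.le (ih k μs))
        (Submodule.smul_mem _ (t (d + 1) ^ l) (pPow_mul_pProd_mem (N := N) hn))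
      rwa [sub_add_cancel] at h
    intro k μs
    have hdl : d * (l + 1) = d * l + d := by ring
    rw [F2, Finset.sum_range_succ]
    have hlow : ∑ j ∈ Finset.range d, t (j + 1) • F2 N d t l (k + j) μs
        ∈ lowWeight N (k + d * (l + 1) + μs.sum) := by
      refine sum_mem fun j hj => Submodule.smul_mem _ _ (hF _ _ _ ?_)
      have := Finset.mem_range.1 hj
      omega
    have hsplit : ∑ j ∈ Finset.range k, F2 N d t l j ((k - 1 - j) :: μs)
        ∈ lowWeight N (k + d * (l + 1) + μs.sum) := by
      refine sum_mem fun j hj => hF _ _ _ ?_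
      have := Finset.mem_range.1 hj
      rw [List.sum_cons]
      omega
    -- If `k = μᵢ = 0`, the index `k + μᵢ - 1` truncates to `0`; the bound still holds as `d ≥ 1`.
    have hjoin : ∑ i : Fin μs.length,
          (μs.get i : ℂ) • F2 N d t l (k + μs.get i - 1) (μs.eraseIdx i)
        ∈ lowWeight N (k + d * (l + 1) + μs.sum) := by
      refine sum_mem fun i _ => Submodule.smul_mem _ _ (hF _ _ _ ?_)
      have := get_add_sum_eraseIdx μs i
      omega
    have htop := Submodule.smul_mem _ (t (d + 1)) (ih (k + d) μs)
    have e : k + d + d * l = k + d * (l + 1) := by omega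
    rw [e, smul_sub, smul_smul, ← pow_succ'] at htop
    convert sub_mem (sub_mem (add_mem hlow htop) hsplit) hjoin using 1
    abel

theorem stmt12 (N d dt : ℕ) (hN : 1 ≤ N) (hd : 1 ≤ d) (hdt : 1 ≤ dt)
    (hddt : 2 ≤ d * dt) (t tt : ℕ → ℂ) (ht : t (d + 1) ≠ 0) (htt : tt (dt + 1) ≠ 0)
    (k : ℕ) (μs : List ℕ) :
    Q2 N d dt t tt k μs
      - (tt (dt + 1) * t (d + 1) ^ dt) • (pPow N (k + d * dt) * pProd N μs)
    ∈ Submodule.span ℂ {w : SymPoly N |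
        ∃ ν : List ℕ, ν.sum < k + d * dt + μs.sum ∧ w = pProd N ν} := by
  have hF := F2_sub_mem (N := N) hd t
  change _ ∈ lowWeight N (k + d * dt + μs.sum)
  rw [Q2, Finset.sum_range_succ]
  have hlow : ∑ l ∈ Finset.range dt, tt (l + 1) • F2 N d t l k μs
      ∈ lowWeight N (k + d * dt + μs.sum) := by
    refine sum_mem fun l hl => Submodule.smul_mem _ _ ?_
    have hlt : d * l < d * dt := Nat.mul_lt_mul_of_pos_left (Finset.mem_range.1 hl) hd
    have h := add_mem (lowWeight_mono (by omega) (hF l k μs))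
      (Submodule.smul_mem _ (t (d + 1) ^ l) (pPow_mul_pProd_mem (N := N) (k := k + d * l)
        (μs := μs) (n := k + d * dt + μs.sum) (by omega)))
    rwa [sub_add_cancel] at h
  have htop := Submodule.smul_mem _ (tt (dt + 1)) (hF dt k μs)
  rw [smul_sub, smul_smul] at htop
  have hp : pPow N (k + 1) * pProd N μs ∈ lowWeight N (k + d * dt + μs.sum) :=
    pPow_mul_pProd_mem (by omega)
  convert sub_mem (add_mem hlow htop) hp using 1
  abel
end

section
/- Let N ≥ 1, let d, d̃ ≥ 1 with d·d̃ ≥ 2, and let t_1,…,t_{d+1}, t̃_1,…,t̃_{d̃+1} ∈ ℂ with t_{d+1} ≠ 0 and t̃_{d̃+1} ≠ 0. Let L ⊆ P_N be the ℂ-linear span of the two-matrix loop-equation polynomials Q_{k;μ_2,…,μ_n} over all k ≥ 0, n ≥ 1 and tuples (μ_2,…,μ_n) of nonnegative integers, and let L^⊥ be the annihilator of L in the dual space P_N^*. Then dim L^⊥ = binom(N+d·d̃−1, N) = (N+d·d̃−1)!/(N!·(d·d̃−1)!). -/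
/-!
The loop equations are expressed through commuting operators on the full ring `ℂ[x_1,…,x_N]`.
Let `D_i f = V'(x_i) f - ∂_i f - ∑_{j ≠ i} (f - s_{ij} f) / (x_i - x_j)`, where
`V'(x) = ∑ t_{j+1} x^j`. Applying `D_i` to `x_i^k p_μ` reproduces the recursion for `F`, so
`F^{(l)}_{k;μ} = ∑_i D_i^l (x_i^k p_μ)` (`LoopEq.F2_eq`), and hence
`Q_{k;μ} = ∑_i A_i (x_i^k p_μ)` with `A_i = Ṽ'(D_i) - x_i` (`LoopEq.Q2_eq`).

* The `D_i` are conjugates of Dunkl operators, so they commute. Moreover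
  `[D_i^l, x_j] = s_{ij} ∑_a D_i^a D_j^{l-1-a} = [D_j^l, x_i]`, so the `A_i` commute as well
  (`LoopEq.loopOp_commute`).
* Put `D = d d̃`. Since `D ≥ 2`, the operator `A_i` is a nonzero multiple of `x_i^D` up to terms of
  lower degree (`LoopEq.loopOp_symbol`). Dividing by that constant gives commuting `B_i`, and the
  linear map `x^{D b + a} ↦ B^b x^a` (`0 ≤ a_i < D`) is well defined by commutativity and unipotent
  for the degree filtration. Therefore `ℂ[x]` is the direct sum of `∑_i A_i ℂ[x]` and the span of the
  monomials with all exponents `< D` (`LoopEq.isCompl_box`).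
* Symmetrization maps `A_i ℂ[x]` into `L`: modulo the differences `g - τ g` with `τ` fixing `i`, the
  polynomial ring is generated by `x_i` and the power sums (`LoopEq.monomial_mem_good`). So `P_N` is
  the direct sum of `L` and the symmetric polynomials with all exponents `< D`
  (`LoopEq.isCompl_L2`).

The last space is the space of functions on multisets of size `N` in a set of `D` elements
(`LoopEq.nonempty_equiv_symBox`), of dimension `binom(N + D - 1, N)`, and `L^⊥` is its dual.
-/

set_option synthInstance.maxHeartbeats 1000000
set_option maxHeartbeats 1000000
open MvPolynomial Finset

/-- The two-matrix loop-equation subspace `L ⊆ P_N`. -/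
noncomputable def L2 (N d dt : ℕ) (t tt : ℕ → ℂ) : Submodule ℂ (SymPoly N) :=
  Submodule.span ℂ {q | ∃ k μs, q = Q2 N d dt t tt k μs}

namespace LoopEq

/-- The full polynomial ring `ℂ[x_1,…,x_N]`, in which the symmetric polynomials live. -/
abbrev Poly (N : ℕ) : Type := MvPolynomial (Fin N) ℂ

variable {N : ℕ}

/-! ### Divided differences -/

/-- The permutation of the variables `x_i ↦ x_{σ i}`, as a linear map. -/
noncomputable def perm (σ : Equiv.Perm (Fin N)) : Poly N →ₗ[ℂ] Poly N :=
  (rename σ : Poly N →ₐ[ℂ] Poly N).toLinearMap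

lemma perm_mul (σ : Equiv.Perm (Fin N)) (f g : Poly N) :
    perm σ (f * g) = perm σ f * perm σ g := by simp [perm]

@[simp] lemma perm_X (σ : Equiv.Perm (Fin N)) (i : Fin N) :
    perm σ (X i : Poly N) = X (σ i) := by simp [perm]

@[simp] lemma perm_C (σ : Equiv.Perm (Fin N)) (a : ℂ) :
    perm σ (C a : Poly N) = C a := by simp [perm]

lemma perm_perm (σ τ : Equiv.Perm (Fin N)) (f : Poly N) :
    perm σ (perm τ f) = perm (σ * τ) f := by
  simp [perm, rename_rename]

@[simp] lemma perm_one (f : Poly N) : perm 1 f = f := by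
  simp [perm]

lemma perm_of_isSymmetric {f : Poly N} (hf : f.IsSymmetric) (σ : Equiv.Perm (Fin N)) :
    perm σ f = f := hf σ

lemma X_sub_X_ne_zero {i j : Fin N} (h : i ≠ j) : (X i - X j : Poly N) ≠ 0 :=
  sub_ne_zero.2 fun e => h (X_injective e)

lemma X_sub_X_dvd (i j : Fin N) (f : Poly N) :
    (X i - X j : Poly N) ∣ f - perm (Equiv.swap i j) f := by
  induction f using MvPolynomial.induction_on with
  | C a => simp
  | add p q hp hq =>
    have := dvd_add hp hq
    rw [map_add]
    convert this using 1
    ring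
  | mul_X p k hp =>
    rw [perm_mul, perm_X]
    have e : p * X k - perm (Equiv.swap i j) p * X (Equiv.swap i j k) =
        (p - perm (Equiv.swap i j) p) * X k +
          perm (Equiv.swap i j) p * (X k - X (Equiv.swap i j k)) := by ring
    rw [e]
    refine dvd_add (Dvd.dvd.mul_right hp _) (Dvd.dvd.mul_left ?_ _)
    rcases eq_or_ne k i with rfl | hi
    · simp
    rcases eq_or_ne k j with rfl | hj
    · rw [Equiv.swap_apply_right]
      exact ⟨-1, by ring⟩
    · simp [Equiv.swap_apply_of_ne_of_ne hi hj]

/-- The divided difference `f ↦ (f - s_{ij} f) / (x_i - x_j)`, with the convention that it is `0`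
when `i = j`. -/
noncomputable def dd (i j : Fin N) : Poly N →ₗ[ℂ] Poly N :=
  if h : i = j then 0 else
    { toFun := fun f => (X_sub_X_dvd i j f).choose
      map_add' := fun f g => by
        apply mul_left_cancel₀ (X_sub_X_ne_zero h)
        rw [mul_add, ← (X_sub_X_dvd i j f).choose_spec, ← (X_sub_X_dvd i j g).choose_spec,
          ← (X_sub_X_dvd i j (f + g)).choose_spec, map_add]
        ring
      map_smul' := fun a f => by
        apply mul_left_cancel₀ (X_sub_X_ne_zero h)
        rw [RingHom.id_apply, mul_smul_comm, ← (X_sub_X_dvd i j f).choose_spec,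
          ← (X_sub_X_dvd i j (a • f)).choose_spec, map_smul, smul_sub] }

lemma dd_spec (i j : Fin N) (f : Poly N) :
    (X i - X j) * dd i j f = f - perm (Equiv.swap i j) f := by
  by_cases h : i = j
  · subst h
    simp [perm]
  · rw [dd, dif_neg h]
    exact (X_sub_X_dvd i j f).choose_spec.symm

lemma dd_self (i : Fin N) (f : Poly N) : dd i i f = 0 := by simp [dd]

lemma dd_eq_of {i j : Fin N} (h : i ≠ j) {f g : Poly N}
    (e : (X i - X j) * g = f - perm (Equiv.swap i j) f) : dd i j f = g :=
  mul_left_cancel₀ (X_sub_X_ne_zero h) (by rw [dd_spec, e])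

lemma dd_eq_zero (i j : Fin N) {f : Poly N} (e : perm (Equiv.swap i j) f = f) :
    dd i j f = 0 := by
  by_cases h : i = j
  · rw [h, dd_self]
  · exact dd_eq_of h (by rw [e]; ring)

lemma dd_mul (i j : Fin N) (f g : Poly N) :
    dd i j (f * g) = f * dd i j g + dd i j f * perm (Equiv.swap i j) g := by
  by_cases h : i = j
  · subst h
    simp [dd_self]
  · apply dd_eq_of h
    have h1 := dd_spec i j f
    have h2 := dd_spec i j g
    rw [perm_mul]
    linear_combination f * h2 + perm (Equiv.swap i j) g * h1

lemma dd_X_left {i j : Fin N} (h : i ≠ j) : dd i j (X i : Poly N) = 1 :=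
  dd_eq_of h (by simp)

lemma dd_X_right {i j : Fin N} (h : i ≠ j) : dd i j (X j : Poly N) = -1 :=
  dd_eq_of h (by simp)

lemma dd_X_other {i j k : Fin N} (hi : k ≠ i) (hj : k ≠ j) : dd i j (X k : Poly N) = 0 :=
  dd_eq_zero _ _ (by simp [Equiv.swap_apply_of_ne_of_ne hi hj])

lemma perm_dd (σ : Equiv.Perm (Fin N)) (i j : Fin N) (f : Poly N) :
    perm σ (dd i j f) = dd (σ i) (σ j) (perm σ f) := by
  by_cases h : i = j
  · subst h
    simp [dd_self]
  · refine (dd_eq_of (fun e => h (σ.injective e)) ?_).symm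
    have := congrArg (perm σ) (dd_spec i j f)
    rw [perm_mul, map_sub, perm_X, perm_X, map_sub, perm_perm] at this
    rw [this, perm_perm, Equiv.mul_swap_eq_swap_mul]

lemma dd_pow {i j : Fin N} (h : i ≠ j) (k : ℕ) :
    dd i j (X i ^ k : Poly N) = ∑ a ∈ range k, X i ^ a * X j ^ (k - 1 - a) := by
  apply dd_eq_of h
  rw [(Commute.all _ _).mul_geom_sum₂]
  simp [perm]

/-! ### Dunkl operators -/

/-- `V'(x_i) = ∑_{j=0}^{d} t_{j+1} x_i^j`. -/
noncomputable def pot (d : ℕ) (t : ℕ → ℂ) (i : Fin N) : Poly N :=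
  ∑ j ∈ range (d + 1), t (j + 1) • X i ^ j

/-- The deformed Dunkl operator
`D_i f = V'(x_i) f - ∂_i f - ∑_{j ≠ i} (f - s_{ij} f) / (x_i - x_j)`,
equal to `-e^W T_i e^{-W}` with `W = ∑ V(x_j)` and `T_i` the Dunkl operator of parameter `1`. The
term `j = i` of the sum vanishes because `dd i i = 0`. -/
noncomputable def dunkl (d : ℕ) (t : ℕ → ℂ) (i : Fin N) : Module.End ℂ (Poly N) :=
  LinearMap.mulLeft ℂ (pot d t i) - (pderiv i : Derivation ℂ (Poly N) (Poly N)).toLinearMap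
    - ∑ j, dd i j

variable (d : ℕ) (t : ℕ → ℂ)

lemma dunkl_apply (i : Fin N) (f : Poly N) :
    dunkl d t i f = pot d t i * f - pderiv i f - ∑ j, dd i j f := by
  simp [dunkl]

lemma perm_pot (σ : Equiv.Perm (Fin N)) (i : Fin N) :
    perm σ (pot d t i) = pot d t (σ i) := by
  simp [pot, perm]

lemma perm_dunkl (σ : Equiv.Perm (Fin N)) (i : Fin N) (f : Poly N) :
    perm σ (dunkl d t i f) = dunkl d t (σ i) (perm σ f) := by
  rw [dunkl_apply, dunkl_apply, map_sub, map_sub, perm_mul, perm_pot, map_sum]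
  congr 1
  · congr 1
    exact (pderiv_rename σ.injective i f).symm
  · simp_rw [perm_dd]
    exact Equiv.sum_comp σ fun j => dd (σ i) j (perm σ f)

lemma dunkl_X_mul_of_ne {i k : Fin N} (h : i ≠ k) (f : Poly N) :
    dunkl d t i (X k * f) = X k * dunkl d t i f + perm (Equiv.swap i k) f := by
  have e : ∑ j, dd i j (X k * f) = X k * ∑ j, dd i j f - perm (Equiv.swap i k) f := by
    rw [mul_sum, ← add_sum_erase univ _ (mem_univ k), ← add_sum_erase univ _ (mem_univ k), dd_mul,
      dd_X_right h, sum_congr rfl (g := fun j => X k * dd i j f)]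
    · ring
    · intro j hj
      rw [dd_mul, dd_X_other h.symm (mem_erase.1 hj).1.symm]
      ring
  rw [dunkl_apply, dunkl_apply, e, Derivation.leibniz, pderiv_X_of_ne h.symm]
  simp only [smul_eq_mul]
  ring

lemma dunkl_X_mul_self (i : Fin N) (f : Poly N) :
    dunkl d t i (X i * f) =
      X i * dunkl d t i f - f - ∑ j ∈ univ.erase i, perm (Equiv.swap i j) f := by
  have e : ∑ j, dd i j (X i * f) =
      X i * ∑ j, dd i j f + ∑ j ∈ univ.erase i, perm (Equiv.swap i j) f := by
    rw [mul_sum, ← add_sum_erase univ _ (mem_univ i), ← add_sum_erase univ _ (mem_univ i), dd_self,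
      dd_self, mul_zero, zero_add, zero_add, ← sum_add_distrib]
    refine sum_congr rfl fun j hj => ?_
    rw [dd_mul, dd_X_left (mem_erase.1 hj).1.symm, one_mul]
  rw [dunkl_apply, dunkl_apply, e, Derivation.leibniz, pderiv_X_self]
  simp only [smul_eq_mul]
  ring

lemma dunkl_one (i : Fin N) : dunkl d t i (1 : Poly N) = pot d t i := by
  rw [dunkl_apply, sum_eq_zero fun j _ => dd_eq_zero i j (by simp [perm])]
  simp

lemma dunkl_pot {i j : Fin N} (h : i ≠ j) :
    dunkl d t i (pot d t j) = pot d t i * pot d t j - dd i j (pot d t j) := by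
  rw [dunkl_apply, sum_eq_single j]
  · have : pderiv i (pot d t j : Poly N) = 0 := by
      rw [pot, map_sum]
      refine sum_eq_zero fun a _ => ?_
      rw [Derivation.map_smul, Derivation.leibniz_pow, pderiv_X_of_ne h.symm]
      simp
    rw [this, sub_zero]
  · intro b _ hb
    refine dd_eq_zero _ _ ?_
    rw [perm_pot, Equiv.swap_apply_of_ne_of_ne h.symm hb.symm]
  · simp

lemma dd_pot_symm {i j : Fin N} (h : i ≠ j) :
    dd i j (pot d t j : Poly N) = dd j i (pot d t i) := by
  apply dd_eq_of h
  have := dd_spec j i (pot d t i : Poly N)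
  rw [perm_pot] at this ⊢
  rw [Equiv.swap_apply_right] at this ⊢
  linear_combination -this

/-- The induction step of commutativity: multiplication by `x_j`. -/
lemma dunkl_comm_X_right {i j : Fin N} (h : i ≠ j) (f : Poly N)
    (hf : dunkl d t i (dunkl d t j f) = dunkl d t j (dunkl d t i f)) :
    dunkl d t i (dunkl d t j (X j * f)) = dunkl d t j (dunkl d t i (X j * f)) := by
  have hi : i ∈ univ.erase j := mem_erase.2 ⟨h, mem_univ _⟩
  have s1 : ∑ l ∈ (univ.erase j).erase i, dunkl d t i (perm (Equiv.swap j l) f) =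
      ∑ l ∈ (univ.erase j).erase i, perm (Equiv.swap j l) (dunkl d t i f) := by
    refine sum_congr rfl fun l hl => ?_
    rw [perm_dunkl, Equiv.swap_apply_of_ne_of_ne h (mem_erase.1 hl).1.symm]
  rw [dunkl_X_mul_self, dunkl_X_mul_of_ne d t h, map_sub, map_sub, map_sum, map_add,
    dunkl_X_mul_of_ne d t h, dunkl_X_mul_self, ← add_sum_erase _ _ hi, ← add_sum_erase _ _ hi, s1,
    hf, perm_dunkl, perm_dunkl, Equiv.swap_comm j i]
  simp only [Equiv.swap_apply_left, Equiv.swap_apply_right]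
  ring

/-- The deformed Dunkl operators commute: their commutator commutes with multiplication by every
`x_k` and kills `1`. -/
lemma dunkl_comm (i j : Fin N) (f : Poly N) :
    dunkl d t i (dunkl d t j f) = dunkl d t j (dunkl d t i f) := by
  rcases eq_or_ne i j with rfl | h
  · rfl
  induction f using MvPolynomial.induction_on with
  | C a =>
    rw [← mul_one (C a : Poly N), C_mul', map_smul, map_smul, map_smul, map_smul, dunkl_one,
      dunkl_one, dunkl_pot d t h, dunkl_pot d t h.symm, dd_pot_symm d t h, mul_comm]
  | add p q hp hq => simp only [map_add, hp, hq]
  | mul_X p k hp =>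
    rw [mul_comm p]
    rcases eq_or_ne k i with rfl | hi
    · exact (dunkl_comm_X_right d t h.symm p hp.symm).symm
    rcases eq_or_ne k j with rfl | hj
    · exact dunkl_comm_X_right d t h p hp
    rw [dunkl_X_mul_of_ne d t hj.symm, dunkl_X_mul_of_ne d t hi.symm, map_add, map_add,
      dunkl_X_mul_of_ne d t hj.symm, dunkl_X_mul_of_ne d t hi.symm, hp, perm_dunkl, perm_dunkl,
      Equiv.swap_apply_of_ne_of_ne h hi.symm, Equiv.swap_apply_of_ne_of_ne h.symm hj.symm]
    ring

/-! ### The commuting loop operators -/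

lemma dunkl_commute (i j : Fin N) : Commute (dunkl d t i) (dunkl d t j) :=
  LinearMap.ext fun f => dunkl_comm d t i j f

lemma perm_dunkl_pow (σ : Equiv.Perm (Fin N)) (i : Fin N) (l : ℕ) (f : Poly N) :
    perm σ ((dunkl d t i ^ l) f) = (dunkl d t (σ i) ^ l) (perm σ f) := by
  induction l generalizing f with
  | zero => simp
  | succ l ih => rw [pow_succ, pow_succ, Module.End.mul_apply, Module.End.mul_apply, ih, perm_dunkl]

/-- The commutator `[D_i^l, x_j]`; apart from the order of the factors in the sum it is symmetric in
`i` and `j`. -/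
lemma dunkl_pow_X {i j : Fin N} (h : i ≠ j) (l : ℕ) :
    dunkl d t i ^ l * LinearMap.mulLeft ℂ (X j) =
      LinearMap.mulLeft ℂ (X j) * dunkl d t i ^ l + (perm (Equiv.swap i j) : Module.End ℂ (Poly N)) *
        ∑ a ∈ range l, dunkl d t i ^ a * dunkl d t j ^ (l - 1 - a) := by
  induction l with
  | zero => simp
  | succ l ih =>
    have h1 : dunkl d t i * LinearMap.mulLeft ℂ (X j) =
        LinearMap.mulLeft ℂ (X j) * dunkl d t i +
          (perm (Equiv.swap i j) : Module.End ℂ (Poly N)) :=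
      LinearMap.ext fun f => dunkl_X_mul_of_ne d t h f
    have h2 : dunkl d t i * (perm (Equiv.swap i j) : Module.End ℂ (Poly N)) =
        (perm (Equiv.swap i j) : Module.End ℂ (Poly N)) * dunkl d t j := by
      refine LinearMap.ext fun f => ?_
      simp only [Module.End.mul_apply]
      rw [perm_dunkl, Equiv.swap_apply_right]
    rw [Nat.add_sub_cancel, (dunkl_commute d t i j).geom_sum₂_succ_eq, pow_succ', mul_assoc, ih,
      mul_add, ← mul_assoc, h1, ← mul_assoc, h2]
    noncomm_ring

variable (dt : ℕ) (tt : ℕ → ℂ)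

/-- The loop operator `A_i = Ṽ'(D_i) - x_i`, where `Ṽ'(y) = ∑_{l=0}^{d̃} t̃_{l+1} y^l`. -/
noncomputable def loopOp (i : Fin N) : Module.End ℂ (Poly N) :=
  ∑ l ∈ range (dt + 1), tt (l + 1) • dunkl d t i ^ l - LinearMap.mulLeft ℂ (X i)

lemma loopOp_apply (i : Fin N) (f : Poly N) :
    loopOp d t dt tt i f =
      ∑ l ∈ range (dt + 1), tt (l + 1) • (dunkl d t i ^ l) f - X i * f := by
  simp [loopOp]

lemma perm_loopOp (σ : Equiv.Perm (Fin N)) (i : Fin N) (f : Poly N) :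
    perm σ (loopOp d t dt tt i f) = loopOp d t dt tt (σ i) (perm σ f) := by
  simp only [loopOp_apply, map_sub, map_sum, map_smul, perm_dunkl_pow, perm_mul, perm_X]

/-- If `a`, `b` commute, `x`, `y` commute and `[a^l, y] = [b^l, x]` for all `l`, then `q(a) - x` and
`q(b) - y` commute for every polynomial `q`. -/
lemma commute_sub_of_bracket_eq {E : Type*} [Ring E] [Algebra ℂ E] {a b x y : E}
    (hab : Commute a b) (hxy : Commute x y)
    (h : ∀ l : ℕ, a ^ l * y - y * a ^ l = b ^ l * x - x * b ^ l) (s : Finset ℕ) (c : ℕ → ℂ) :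
    Commute (∑ l ∈ s, c l • a ^ l - x) (∑ l ∈ s, c l • b ^ l - y) := by
  have hT : Commute (∑ l ∈ s, c l • a ^ l) (∑ l ∈ s, c l • b ^ l) :=
    Commute.sum_left _ _ _ fun i _ => Commute.sum_right _ _ _ fun j _ =>
      ((hab.pow_pow i j).smul_left _).smul_right _
  have key : (∑ l ∈ s, c l • a ^ l) * y - y * (∑ l ∈ s, c l • a ^ l) =
      (∑ l ∈ s, c l • b ^ l) * x - x * (∑ l ∈ s, c l • b ^ l) := by
    simp only [sum_mul, mul_sum, ← sum_sub_distrib, smul_mul_assoc, mul_smul_comm, ← smul_sub, h]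
  generalize (∑ l ∈ s, c l • a ^ l) = A at *
  generalize (∑ l ∈ s, c l • b ^ l) = B at *
  have e : (A - x) * (B - y) - (B - y) * (A - x) =
      (A * B - B * A) + (x * y - y * x) - ((A * y - y * A) - (B * x - x * B)) := by noncomm_ring
  rw [hT.eq, hxy.eq, key, sub_self, sub_self, sub_self, add_zero, sub_zero] at e
  exact sub_eq_zero.1 e

lemma loopOp_commute (i j : Fin N) : Commute (loopOp d t dt tt i) (loopOp d t dt tt j) := by
  rcases eq_or_ne i j with rfl | h
  · exact Commute.refl _
  refine commute_sub_of_bracket_eq (dunkl_commute d t i j) ?_ (fun l => ?_) _ _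
  · refine LinearMap.ext fun f => ?_
    simp only [Module.End.mul_apply, LinearMap.mulLeft_apply]
    ring
  · rw [dunkl_pow_X d t h, dunkl_pow_X d t h.symm, (dunkl_commute d t i j).geom_sum₂_comm,
      Equiv.swap_comm j i, add_sub_cancel_left, add_sub_cancel_left]

/-! ### Leading terms -/

/-- Polynomials all of whose monomials have total degree `< n`. -/
noncomputable def LT (N n : ℕ) : Submodule ℂ (Poly N) :=
  restrictSupport ℂ {m | m.degree < n}

lemma mem_LT {n : ℕ} {f : Poly N} : f ∈ LT N n ↔ ∀ m ∈ f.support, m.degree < n := Iff.rfl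

lemma LT_mono {n n' : ℕ} (h : n ≤ n') : LT N n ≤ LT N n' :=
  restrictSupport_mono ℂ fun _ hm => lt_of_lt_of_le hm h

lemma LT_zero {f : Poly N} (h : f ∈ LT N 0) : f = 0 := by
  rw [mem_LT] at h
  rw [← support_eq_empty]
  exact Finset.eq_empty_of_forall_notMem fun m hm => absurd (h m hm) (Nat.not_lt_zero _)

lemma monomial_mem_LT {m : Fin N →₀ ℕ} {n : ℕ} (h : m.degree < n) (a : ℂ) :
    monomial m a ∈ LT N n :=
  (monomial_mem_restrictSupport ℂ).2 (Or.inl h)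

lemma LT_le {n : ℕ} {S : Submodule ℂ (Poly N)}
    (h : ∀ m : Fin N →₀ ℕ, m.degree < n → monomial m 1 ∈ S) : LT N n ≤ S := by
  rw [LT, restrictSupport_eq_span, Submodule.span_le]
  rintro _ ⟨m, hm, rfl⟩
  exact h m hm

lemma exists_mem_LT (f : Poly N) : ∃ n, f ∈ LT N n := by
  refine ⟨f.support.sup Finsupp.degree + 1, fun m hm => ?_⟩
  exact Nat.lt_succ_of_le (Finset.le_sup (f := Finsupp.degree) hm)

lemma mul_mem_LT {a b : ℕ} {f g : Poly N} (hf : f ∈ LT N (a + 1)) (hg : g ∈ LT N b) :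
    f * g ∈ LT N (a + b) := by
  classical
  intro m hm
  obtain ⟨x, hx, y, hy, rfl⟩ := Finset.mem_add.1 (support_mul f g hm)
  have h1 := mem_LT.1 hf x hx
  have h2 := mem_LT.1 hg y hy
  simp only [Set.mem_ofPred_eq, map_add]
  omega

lemma X_pow_mem_LT (i : Fin N) (k : ℕ) : (X i ^ k : Poly N) ∈ LT N (k + 1) := by
  rw [X_pow_eq_monomial]
  exact monomial_mem_LT (by simp) _

lemma X_mem_LT (i : Fin N) : (X i : Poly N) ∈ LT N 2 := by
  simpa using X_pow_mem_LT (N := N) i 1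

lemma perm_mem_LT (σ : Equiv.Perm (Fin N)) {n : ℕ} {f : Poly N} (hf : f ∈ LT N n) :
    perm σ f ∈ LT N n := by
  refine (LT_le (S := (LT N n).comap (perm σ)) fun m hm => ?_) hf
  change rename σ (monomial m (1 : ℂ)) ∈ LT N n
  rw [rename_monomial]
  exact monomial_mem_LT (by rwa [Finsupp.degree_mapDomain]) _

/-- `T` has symbol (leading term) multiplication by `g`, where `g` has degree `≤ p`: the operator
`T - g` raises degrees by less than `p`. -/
def HasSymbol (T : Module.End ℂ (Poly N)) (g : Poly N) (p : ℕ) : Prop :=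
  g ∈ LT N (p + 1) ∧ ∀ n, ∀ f ∈ LT N (n + 1), T f - g * f ∈ LT N (n + p)

lemma HasSymbol.mem {T : Module.End ℂ (Poly N)} {g : Poly N} {p : ℕ} (h : HasSymbol T g p)
    {n : ℕ} {f : Poly N} (hf : f ∈ LT N n) : T f ∈ LT N (n + p) := by
  cases n with
  | zero => rw [LT_zero hf, map_zero]; exact zero_mem _
  | succ n =>
    have h1 := LT_mono (show n + p ≤ n + 1 + p by omega) (h.2 n f hf)
    have h2 := mul_mem_LT h.1 hf
    rw [add_comm] at h2
    simpa using add_mem h1 h2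

lemma HasSymbol.mul {T T' : Module.End ℂ (Poly N)} {g g' : Poly N} {p p' : ℕ}
    (h : HasSymbol T g p) (h' : HasSymbol T' g' p') :
    HasSymbol (T * T') (g * g') (p + p') := by
  refine ⟨?_, fun n f hf => ?_⟩
  · rw [add_assoc]
    exact mul_mem_LT h.1 h'.1
  have hT : T' f ∈ LT N (n + p' + 1) := by
    have := h'.mem hf
    rwa [add_right_comm] at this
  have h1 := h.2 _ _ hT
  have h2 := mul_mem_LT h.1 (h'.2 _ _ hf)
  have e : (T * T') f - g * g' * f = (T (T' f) - g * T' f) + g * (T' f - g' * f) := by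
    rw [Module.End.mul_apply]; ring
  rw [e]
  refine add_mem (LT_mono (by omega) h1) (LT_mono (by omega) h2)

lemma HasSymbol.pow {T : Module.End ℂ (Poly N)} {g : Poly N} {p : ℕ} (h : HasSymbol T g p)
    (l : ℕ) : HasSymbol (T ^ l) (g ^ l) (l * p) := by
  induction l with
  | zero =>
    refine ⟨?_, fun n f _ => ?_⟩
    · rw [pow_zero, ← C_1]
      exact monomial_mem_LT (by simp) _
    · simp
  | succ l ih =>
    rw [pow_succ, pow_succ, Nat.succ_mul]
    exact ih.mul h

lemma HasSymbol.smul {T : Module.End ℂ (Poly N)} {g : Poly N} {p : ℕ} (h : HasSymbol T g p)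
    (a : ℂ) : HasSymbol (a • T) (a • g) p := by
  refine ⟨Submodule.smul_mem _ _ h.1, fun n f hf => ?_⟩
  rw [LinearMap.smul_apply, smul_mul_assoc, ← smul_sub]
  exact Submodule.smul_mem _ _ (h.2 n f hf)

lemma pot_sub_mem_LT (i : Fin N) : pot d t i - t (d + 1) • X i ^ d ∈ LT N d := by
  rw [pot, sum_range_succ, add_sub_cancel_right]
  refine sum_mem fun j hj => Submodule.smul_mem _ _ (LT_mono ?_ (X_pow_mem_LT i j))
  exact mem_range.1 hj

lemma dunkl_monomial (i : Fin N) (m : Fin N →₀ ℕ) :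
    dunkl d t i (monomial m 1) - t (d + 1) • X i ^ d * monomial m 1 ∈ LT N (m.degree + d) := by
  have hstep : ∀ (m : Fin N →₀ ℕ) (k : Fin N),
      dunkl d t i (monomial m 1) - t (d + 1) • X i ^ d * monomial m 1 ∈ LT N (m.degree + d) →
      dunkl d t i (X k * monomial m 1) - t (d + 1) • X i ^ d * (X k * monomial m 1) ∈
        LT N (m.degree + 1 + d) := by
    intro m k ih
    have h1 : X k * (dunkl d t i (monomial m 1) - t (d + 1) • X i ^ d * monomial m 1) ∈
        LT N (m.degree + 1 + d) := LT_mono (by omega) (mul_mem_LT (X_mem_LT k) ih)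
    have hm : (monomial m 1 : Poly N) ∈ LT N (m.degree + 1 + d) :=
      monomial_mem_LT (by omega) _
    rcases eq_or_ne i k with rfl | hk
    · rw [dunkl_X_mul_self]
      have h2 := sub_mem (sub_mem h1 hm)
        (sum_mem fun j (_ : j ∈ univ.erase i) => perm_mem_LT (Equiv.swap i j) hm)
      convert h2 using 1
      ring
    · rw [dunkl_X_mul_of_ne d t hk]
      convert add_mem h1 (perm_mem_LT (Equiv.swap i k) hm) using 1
      ring
  induction hn : m.degree generalizing m with
  | zero =>
    have : m = 0 := (Finsupp.degree_eq_zero_iff m).1 hn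
    subst this
    rw [← C_apply, C_1, dunkl_one, mul_one, zero_add]
    exact pot_sub_mem_LT d t i
  | succ n ih =>
    obtain ⟨k, hk⟩ : ∃ k, m k ≠ 0 := by
      by_contra! hh
      have : m = 0 := Finsupp.ext hh
      simp [this] at hn
    obtain ⟨m', rfl⟩ : ∃ m', m = Finsupp.single k 1 + m' :=
      ⟨m - Finsupp.single k 1, (add_tsub_cancel_of_le (by
        rw [Finsupp.single_le_iff]; omega)).symm⟩
    have hm' : m'.degree = n := by
      simp only [map_add, Finsupp.degree_single] at hn
      omega
    have := hstep m' k (by rw [hm']; exact ih m' hm')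
    rwa [hm', X, monomial_mul, one_mul] at this

lemma dunkl_symbol (i : Fin N) : HasSymbol (dunkl d t i) (t (d + 1) • X i ^ d) d := by
  refine ⟨Submodule.smul_mem _ _ (X_pow_mem_LT i d), fun n f hf => ?_⟩
  let T : Module.End ℂ (Poly N) := dunkl d t i - LinearMap.mulLeft ℂ (t (d + 1) • X i ^ d)
  refine (LT_le (S := (LT N (n + d)).comap T) fun m hm => ?_) hf
  exact LT_mono (by omega) (dunkl_monomial d t i m)

/-- The leading term of `A_i` is `t̃_{d̃+1} t_{d+1}^{d̃} x_i^{d d̃}`. The hypothesis `2 ≤ d * d̃` makes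
the term `-x_i` of lower order. -/
lemma loopOp_symbol (hd : 1 ≤ d) (hddt : 2 ≤ d * dt) (i : Fin N) :
    HasSymbol (loopOp d t dt tt i) ((tt (dt + 1) * t (d + 1) ^ dt) • X i ^ (d * dt)) (d * dt) := by
  refine ⟨Submodule.smul_mem _ _ (X_pow_mem_LT i _), fun n f hf => ?_⟩
  have h1 := (((dunkl_symbol d t i).pow dt).smul (tt (dt + 1))).2 n f hf
  rw [smul_pow, smul_smul, ← pow_mul, LinearMap.smul_apply, mul_comm dt d] at h1
  have h2 : X i * f ∈ LT N (n + d * dt) :=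
    LT_mono (by omega) (mul_mem_LT (X_mem_LT i) hf)
  have h3 : ∑ l ∈ range dt, tt (l + 1) • (dunkl d t i ^ l) f ∈ LT N (n + d * dt) := by
    refine sum_mem fun l hl => Submodule.smul_mem _ _ ?_
    refine LT_mono ?_ (((dunkl_symbol d t i).pow l).mem hf)
    have : (l + 1) * d ≤ dt * d := Nat.mul_le_mul_right d (mem_range.1 hl)
    rw [Nat.succ_mul] at this
    rw [mul_comm d dt]
    omega
  rw [loopOp_apply, sum_range_succ]
  convert sub_mem (add_mem h3 h1) h2 using 1
  ring

/-! ### The complement of the image of commuting operators with symbols `x_i ^ D` -/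

/-- Polynomials in which every variable occurs with exponents `< D`. -/
noncomputable def box (N D : ℕ) : Submodule ℂ (Poly N) :=
  restrictSupport ℂ {m | ∀ i, m i < D}

lemma exists_algHom_of_commute {B : Fin N → Module.End ℂ (Poly N)}
    (hB : ∀ i j, Commute (B i) (B j)) :
    ∃ θ : Poly N →ₐ[ℂ] Module.End ℂ (Poly N), ∀ i, θ (X i) = B i := by
  have hc : IsMulCommutative (Algebra.adjoin ℂ (Set.range B)) :=
    Algebra.isMulCommutative_adjoin ℂ (by
      rintro _ ⟨i, rfl⟩ _ ⟨j, rfl⟩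
      exact hB i j)
  let _ : CommRing (Algebra.adjoin ℂ (Set.range B)) :=
    { (Algebra.adjoin ℂ (Set.range B)).toRing with mul_comm := fun a b => hc.is_comm.comm a b }
  let b : Fin N → Algebra.adjoin ℂ (Set.range B) :=
    fun i => ⟨B i, Algebra.subset_adjoin ⟨i, rfl⟩⟩
  let φ : Poly N →ₐ[ℂ] Algebra.adjoin ℂ (Set.range B) := aeval b
  refine ⟨(Algebra.adjoin ℂ (Set.range B)).val.comp φ, fun i => ?_⟩
  change ((φ (X i) : Algebra.adjoin ℂ (Set.range B)) : Module.End ℂ (Poly N)) = B i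
  have : φ (X i) = b i := aeval_X b i
  rw [this]

/-- For commuting operators `B_i` there is a linear map `Ψ` sending `x^{D b + a}` (with all
`a_i < D`) to `B^b x^a`: it is the identity on `box N D` and turns multiplication by `x_i ^ D` into
`B_i`. -/
lemma exists_straightening {B : Fin N → Module.End ℂ (Poly N)}
    (hB : ∀ i j, Commute (B i) (B j)) {D : ℕ} (hD : 0 < D) :
    ∃ Ψ : Poly N →ₗ[ℂ] Poly N, (∀ f ∈ box N D, Ψ f = f) ∧
      ∀ i f, Ψ (X i ^ D * f) = B i (Ψ f) := by
  obtain ⟨θ, hθ⟩ := exists_algHom_of_commute hB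
  let quo : (Fin N →₀ ℕ) → (Fin N →₀ ℕ) := fun m => m.mapRange (· / D) (Nat.zero_div D)
  let rem : (Fin N →₀ ℕ) → (Fin N →₀ ℕ) := fun m => m.mapRange (· % D) (Nat.zero_mod D)
  obtain ⟨Ψ, hΨ⟩ : ∃ Ψ : Poly N →ₗ[ℂ] Poly N,
      ∀ m, Ψ (monomial m 1) = θ (monomial (quo m) 1) (monomial (rem m) 1) :=
    ⟨(basisMonomials (Fin N) ℂ).constr ℂ fun m => θ (monomial (quo m) 1) (monomial (rem m) 1),
      fun m => by
        have := (basisMonomials (Fin N) ℂ).constr_basis ℂ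
          (fun m => θ (monomial (quo m) 1) (monomial (rem m) 1)) m
        rwa [coe_basisMonomials] at this⟩
  refine ⟨Ψ, fun f hf => ?_, fun i f => ?_⟩
  · have : box N D ≤ LinearMap.eqLocus Ψ LinearMap.id := by
      rw [box, restrictSupport_eq_span, Submodule.span_le]
      rintro _ ⟨m, hm, rfl⟩
      have h1 : quo m = 0 := Finsupp.ext fun i => by simpa [quo] using Or.inr (hm i)
      have h2 : rem m = m := Finsupp.ext fun i => by simpa [rem] using Nat.mod_eq_of_lt (hm i)
      change Ψ (monomial m 1) = monomial m 1
      rw [hΨ, h1, h2, ← C_apply, C_1, map_one, Module.End.one_apply]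
    exact this hf
  · have : Ψ ∘ₗ LinearMap.mulLeft ℂ (X i ^ D) = (B i : Poly N →ₗ[ℂ] Poly N) ∘ₗ Ψ := by
      refine (basisMonomials (Fin N) ℂ).ext fun m => ?_
      rw [coe_basisMonomials]
      change Ψ (X i ^ D * monomial m 1) = B i (Ψ (monomial m 1))
      rw [X_pow_eq_monomial, monomial_mul, one_mul, hΨ, hΨ, ← hθ i, ← Module.End.mul_apply,
        ← map_mul, X, monomial_mul, one_mul]
      have h1 : quo (Finsupp.single i D + m) = Finsupp.single i 1 + quo m :=
        Finsupp.ext fun j => by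
          by_cases h : i = j
          · subst h
            simp [quo, Nat.add_div_left _ hD, add_comm]
          · simp [quo, h]
      have h2 : rem (Finsupp.single i D + m) = rem m :=
        Finsupp.ext fun j => by
          by_cases h : i = j
          · subst h
            simp [rem]
          · simp [rem, h]
      rw [h1, h2]
    exact LinearMap.congr_fun this f

/-- A monomial outside of the box is `x_i ^ D` times a monomial. -/
lemma exists_eq_add_of_not_box {D : ℕ} {m : Fin N →₀ ℕ} (h : ¬ ∀ i, m i < D) :
    ∃ i m', m = Finsupp.single i D + m' := by
  push Not at h
  obtain ⟨i, hi⟩ := h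
  exact ⟨i, m - Finsupp.single i D, (add_tsub_cancel_of_le (by
    rwa [Finsupp.single_le_iff])).symm⟩

lemma monomial_single_add (i : Fin N) (D : ℕ) (m : Fin N →₀ ℕ) :
    (monomial (Finsupp.single i D + m) 1 : Poly N) = X i ^ D * monomial m 1 := by
  rw [X_pow_eq_monomial, monomial_mul, one_mul]

/-- Since `B_i` agrees with multiplication by `x_i ^ D` up to terms of lower degree, the straightening
map is unipotent, hence bijective, and carries the decomposition of the polynomial ring into the ideal
`(x_1 ^ D, …, x_N ^ D)` and the box to the one claimed here. -/
lemma isCompl_box {B : Fin N → Module.End ℂ (Poly N)}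
    (hB : ∀ i j, Commute (B i) (B j)) {D : ℕ} (hD : 0 < D)
    (hs : ∀ i, HasSymbol (B i) (X i ^ D) D) :
    IsCompl (⨆ i, LinearMap.range (B i)) (box N D) := by
  obtain ⟨Ψ, hΨ1, hΨ2⟩ := exists_straightening hB hD
  have hbox : ∀ m : Fin N →₀ ℕ, (∀ i, m i < D) → (monomial m 1 : Poly N) ∈ box N D :=
    fun m hm => (monomial_mem_restrictSupport ℂ).2 (Or.inl hm)
  -- `Ψ` is unipotent with respect to the degree.
  have hmon : ∀ n (m : Fin N →₀ ℕ), m.degree = n → Ψ (monomial m 1) - monomial m 1 ∈ LT N n := by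
    intro n
    induction n using Nat.strong_induction_on with
    | _ n ih =>
      intro m hm
      by_cases h : ∀ i, m i < D
      · rw [hΨ1 _ (hbox m h), sub_self]
        exact zero_mem _
      · obtain ⟨i, m', rfl⟩ := exists_eq_add_of_not_box h
        rw [map_add, Finsupp.degree_single] at hm
        have h0 := ih m'.degree (by omega) m' rfl
        have h1 : Ψ (monomial m' 1) ∈ LT N (m'.degree + 1) := by
          have := add_mem (LT_mono (Nat.le_succ _) h0)
            (monomial_mem_LT (Nat.lt_succ_self m'.degree) 1)
          rwa [sub_add_cancel] at this
        have h2 := (hs i).2 _ _ h1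
        have h3 := mul_mem_LT (X_pow_mem_LT i D) h0
        rw [monomial_single_add, hΨ2]
        rw [add_comm] at h2
        have h4 := add_mem h2 h3
        rw [hm] at h4
        convert h4 using 1
        ring
  have huni : ∀ n, ∀ f ∈ LT N (n + 1), Ψ f - f ∈ LT N n := by
    intro n f hf
    refine (LT_le (S := (LT N n).comap (Ψ - LinearMap.id)) fun m hm => ?_) hf
    exact LT_mono (Nat.lt_succ_iff.1 hm) (hmon _ m rfl)
  have hinj : ∀ f, Ψ f = 0 → f = 0 := by
    intro f hf
    have : ∀ n, f ∈ LT N n → f = 0 := by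
      intro n
      induction n with
      | zero => exact LT_zero
      | succ n ih =>
        intro h
        have := huni n f h
        rw [hf, zero_sub, neg_mem_iff] at this
        exact ih this
    obtain ⟨n, hn⟩ := exists_mem_LT f
    exact this n hn
  have hsurj : ∀ f, f ∈ LinearMap.range Ψ := by
    have : ∀ n, LT N n ≤ LinearMap.range Ψ := by
      intro n
      induction n with
      | zero => intro f hf; rw [LT_zero hf]; exact zero_mem _
      | succ n ih =>
        intro f hf
        have := sub_mem (LinearMap.mem_range_self Ψ f) (ih (huni n f hf))
        rwa [sub_sub_cancel] at this
    intro f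
    obtain ⟨n, hn⟩ := exists_mem_LT f
    exact this n hn
  constructor
  · rw [Submodule.disjoint_def]
    -- The images of the `B_i` lie in `Ψ` of the ideal `(x_1 ^ D, …, x_N ^ D)`.
    let J : Submodule ℂ (Poly N) := restrictSupport ℂ {m | ∃ i, D ≤ m i}
    have hI : (⨆ i, LinearMap.range (B i)) ≤ J.map Ψ := by
      refine iSup_le fun i => ?_
      rintro _ ⟨g, rfl⟩
      obtain ⟨h, rfl⟩ := hsurj g
      rw [← hΨ2]
      refine Submodule.mem_map_of_mem ?_
      intro m hm
      classical
      obtain ⟨x, hx, y, -, rfl⟩ := Finset.mem_add.1 (support_mul _ _ hm)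
      rw [X_pow_eq_monomial] at hx
      have := Finset.mem_singleton.1 (support_monomial_subset hx)
      subst this
      exact ⟨i, by simp⟩
    intro w hw hwW
    obtain ⟨j, hj, rfl⟩ := hI hw
    have e : Ψ j = j := by
      have := hinj (Ψ j - j) (by rw [map_sub, hΨ1 _ hwW, sub_self])
      exact sub_eq_zero.1 this
    rw [e] at hwW ⊢
    rw [← support_eq_empty]
    refine Finset.eq_empty_of_forall_notMem fun m hm => ?_
    obtain ⟨i, hi⟩ := hj hm
    exact absurd (hwW hm i) (not_lt.2 hi)
  · rw [codisjoint_iff_le_sup]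
    have hle : ∀ n, LT N n ≤ ((⨆ i, LinearMap.range (B i)) ⊔ box N D).comap Ψ := by
      refine fun n => LT_le fun m _ => ?_
      by_cases h : ∀ i, m i < D
      · rw [Submodule.mem_comap, hΨ1 _ (hbox m h)]
        exact Submodule.mem_sup_right (hbox m h)
      · obtain ⟨i, m', rfl⟩ := exists_eq_add_of_not_box h
        rw [Submodule.mem_comap, monomial_single_add, hΨ2]
        exact Submodule.mem_sup_left
          (Submodule.mem_iSup_of_mem i (LinearMap.mem_range_self (B i) _))
    intro g _
    obtain ⟨f, rfl⟩ := hsurj g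
    obtain ⟨n, hn⟩ := exists_mem_LT f
    exact hle n hn

/-! ### Symmetric polynomials in the box -/

lemma perm_mem_box {D : ℕ} (σ : Equiv.Perm (Fin N)) {f : Poly N} (hf : f ∈ box N D) :
    perm σ f ∈ box N D := by
  have : box N D ≤ (box N D).comap (perm σ) := by
    conv_lhs => rw [box, restrictSupport_eq_span]
    rw [Submodule.span_le]
    rintro _ ⟨m, hm, rfl⟩
    change rename σ (monomial m (1 : ℂ)) ∈ box N D
    rw [rename_monomial]
    refine (monomial_mem_restrictSupport ℂ).2 (Or.inl fun i => ?_)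
    rw [Finsupp.mapDomain_equiv_apply]
    exact hm _
  exact this hf

/-- The symmetric polynomials in the box. -/
noncomputable def symBox (N D : ℕ) : Submodule ℂ (SymPoly N) :=
  (box N D).comap (symmetricSubalgebra (Fin N) ℂ).val.toLinearMap

/-- The exponent vector with entries `a_i < D`. -/
noncomputable def expo {D : ℕ} (a : Fin N → Fin D) : Fin N →₀ ℕ :=
  Finsupp.equivFunOnFinite.symm fun i => (a i : ℕ)

lemma expo_apply {D : ℕ} (a : Fin N → Fin D) (i : Fin N) : expo a i = a i := rfl

lemma expo_injective {D : ℕ} : Function.Injective (expo : (Fin N → Fin D) → Fin N →₀ ℕ) :=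
  fun a b h => funext fun i => Fin.ext (by rw [← expo_apply, h, expo_apply])

lemma mapDomain_expo {D : ℕ} (σ : Equiv.Perm (Fin N)) (a : Fin N → Fin D) :
    (expo a).mapDomain σ = expo (a ∘ σ.symm) :=
  Finsupp.ext fun i => by rw [Finsupp.mapDomain_equiv_apply]; rfl

/-- The multiset of values of `a`. -/
def toSym {D : ℕ} (a : Fin N → Fin D) : Sym (Fin D) N :=
  ⟨univ.val.map a, by simp⟩

lemma toSym_comp {D : ℕ} (a : Fin N → Fin D) (σ : Equiv.Perm (Fin N)) :
    toSym (a ∘ σ) = toSym a := by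
  apply Subtype.ext
  change univ.val.map (a ∘ σ) = univ.val.map a
  rw [← Multiset.map_map, Multiset.map_univ_val_equiv]

lemma exists_perm_of_toSym_eq {D : ℕ} {a b : Fin N → Fin D} (h : toSym a = toSym b) :
    ∃ σ : Equiv.Perm (Fin N), b ∘ σ = a := by
  have hc : ∀ c, Nonempty ({i // a i = c} ≃ {i // b i = c}) := by
    intro c
    refine ⟨Fintype.equivOfCardEq ?_⟩
    have h1 : (univ.val.map a).count c = (univ.val.map b).count c :=
      congrArg (Multiset.count c) (congrArg Subtype.val h)
    rw [Multiset.count_map, Multiset.count_map] at h1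
    rw [Fintype.card_subtype, Fintype.card_subtype]
    simp only [eq_comm (b := c)]
    convert h1 using 1 <;> rfl
  let e : ∀ c, {i // a i = c} ≃ {i // b i = c} := fun c => (hc c).some
  exact ⟨Equiv.ofFiberEquiv e, funext fun i => Equiv.ofFiberEquiv_map e i⟩

lemma toSym_surjective {D : ℕ} : Function.Surjective (toSym : (Fin N → Fin D) → Sym (Fin D) N) := by
  rintro ⟨s, hs⟩
  induction s using Quotient.inductionOn with
  | _ l =>
    have hl : l.length = N := by simpa using hs
    subst hl
    refine ⟨l.get, Subtype.ext ?_⟩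
    change univ.val.map l.get = (l : Multiset (Fin D))
    simp [Fin.univ_def]

/-- The polynomial whose coefficient at `x^a`, `a_i < D`, is the value of `h` at the multiset of
the exponents. -/
noncomputable def symSum (N D : ℕ) : (Sym (Fin D) N → ℂ) →ₗ[ℂ] Poly N :=
  ∑ a : Fin N → Fin D, (monomial (expo a)).comp (LinearMap.proj (toSym a))

lemma symSum_apply {D : ℕ} (h : Sym (Fin D) N → ℂ) :
    symSum N D h = ∑ a : Fin N → Fin D, monomial (expo a) (h (toSym a)) := by
  simp [symSum]

lemma coeff_symSum {D : ℕ} (h : Sym (Fin D) N → ℂ) (a : Fin N → Fin D) :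
    coeff (expo a) (symSum N D h) = h (toSym a) := by
  classical
  rw [symSum_apply, coeff_sum, sum_eq_single a]
  · simp
  · intro b _ hb
    rw [coeff_monomial, if_neg fun e => hb (expo_injective e)]
  · simp

lemma symSum_mem_box {D : ℕ} (h : Sym (Fin D) N → ℂ) : symSum N D h ∈ box N D := by
  rw [symSum_apply]
  exact sum_mem fun a _ => (monomial_mem_restrictSupport ℂ).2 (Or.inl fun i => (a i).2)

lemma symSum_isSymmetric {D : ℕ} (h : Sym (Fin D) N → ℂ) : (symSum N D h).IsSymmetric := by
  intro σ
  rw [symSum_apply, map_sum]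
  conv_rhs => rw [← Equiv.sum_comp (σ.arrowCongr (Equiv.refl (Fin D)))]
  refine sum_congr rfl fun a _ => ?_
  have e : σ.arrowCongr (Equiv.refl (Fin D)) a = a ∘ σ.symm := rfl
  rw [rename_monomial, mapDomain_expo, e, toSym_comp]

/-- A symmetric polynomial has equal coefficients at exponent vectors with the same multiset of
entries. -/
lemma symSum_surjective {D : ℕ} {f : Poly N} (hf : f ∈ box N D) (hs : f.IsSymmetric) :
    ∃ h, symSum N D h = f := by
  choose rep hrep using toSym_surjective (N := N) (D := D)
  refine ⟨fun s => coeff (expo (rep s)) f, ?_⟩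
  ext m
  by_cases hm : ∀ i, m i < D
  · obtain ⟨a, rfl⟩ : ∃ a : Fin N → Fin D, expo a = m :=
      ⟨fun i => ⟨m i, hm i⟩, Finsupp.ext fun i => rfl⟩
    rw [coeff_symSum]
    obtain ⟨σ, hσ⟩ := exists_perm_of_toSym_eq (hrep (toSym a))
    have e : (expo a).mapDomain σ.symm = expo (rep (toSym a)) := by
      rw [mapDomain_expo, Equiv.symm_symm, hσ]
    rw [← e]
    conv_lhs => rw [← hs σ.symm]
    exact coeff_rename_mapDomain _ σ.symm.injective _ _
  · have h0 : ∀ g ∈ box N D, coeff m g = 0 := fun g hg => by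
      by_contra hne
      exact hm (hg (mem_support_iff.2 hne))
    rw [h0 _ hf, h0 _ (symSum_mem_box _)]

/-- The symmetric polynomials in the box are parametrized by functions on multisets. -/
lemma nonempty_equiv_symBox (N D : ℕ) : Nonempty ((Sym (Fin D) N → ℂ) ≃ₗ[ℂ] symBox N D) := by
  let Φ : (Sym (Fin D) N → ℂ) →ₗ[ℂ] symBox N D :=
    { toFun := fun h => ⟨⟨symSum N D h, (mem_symmetricSubalgebra _).2 (symSum_isSymmetric h)⟩,
        symSum_mem_box h⟩
      map_add' := fun g h => Subtype.ext (Subtype.ext (map_add _ g h))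
      map_smul' := fun c h => Subtype.ext (Subtype.ext (map_smul _ c h)) }
  refine ⟨LinearEquiv.ofBijective Φ ⟨fun g h e => ?_, fun f => ?_⟩⟩
  · have e' : symSum N D g = symSum N D h :=
      congrArg (fun x : symBox N D => ((x : SymPoly N) : Poly N)) e
    funext s
    obtain ⟨a, rfl⟩ := toSym_surjective s
    rw [← coeff_symSum g a, ← coeff_symSum h a, e']
  · obtain ⟨h, hh⟩ := symSum_surjective (f := ((f : SymPoly N) : Poly N)) f.2
      ((mem_symmetricSubalgebra _).1 (f : SymPoly N).2)
    exact ⟨h, Subtype.ext (Subtype.ext hh)⟩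

/-! ### Loop equations through Dunkl operators -/

/-- `p_μ` as an element of the full polynomial ring. -/
noncomputable def P (N : ℕ) (μs : List ℕ) : Poly N := ((pProd N μs : SymPoly N) : Poly N)

lemma P_nil : P N [] = 1 := by simp [P, pProd]

lemma P_cons (k : ℕ) (μs : List ℕ) : P N (k :: μs) = psum (Fin N) ℂ k * P N μs := by
  simp [P, pProd, pPow]

lemma P_isSymmetric (μs : List ℕ) : (P N μs).IsSymmetric :=
  (mem_symmetricSubalgebra _).1 (pProd N μs).2

lemma perm_P (σ : Equiv.Perm (Fin N)) (μs : List ℕ) : perm σ (P N μs) = P N μs :=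
  P_isSymmetric μs σ

lemma pderiv_psum (i : Fin N) (k : ℕ) :
    pderiv i (psum (Fin N) ℂ k) = (k : ℂ) • (X i ^ (k - 1) : Poly N) := by
  rw [psum, map_sum, sum_eq_single i]
  · rw [Derivation.leibniz_pow, pderiv_X_self]
    simp [Nat.cast_smul_eq_nsmul]
  · intro j _ hj
    rw [Derivation.leibniz_pow, pderiv_X_of_ne hj]
    simp
  · simp

lemma pderiv_P (i : Fin N) (μs : List ℕ) :
    pderiv i (P N μs) = ∑ a : Fin μs.length,
      (μs.get a : ℂ) • (X i ^ (μs.get a - 1) * P N (μs.eraseIdx a)) := by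
  induction μs with
  | nil => simp [P_nil]
  | cons m μs ih =>
    rw [P_cons, Derivation.leibniz, ih, pderiv_psum]
    change _ = ∑ a : Fin (μs.length + 1), _
    rw [Fin.sum_univ_succ]
    simp only [smul_eq_mul, List.get_cons_zero, List.get_cons_succ', Fin.val_zero, Fin.val_succ,
      List.eraseIdx_cons_zero, List.eraseIdx_cons_succ, P_cons, mul_sum]
    rw [add_comm]
    congr 1
    · rw [mul_smul_comm, mul_comm]
    · refine sum_congr rfl fun a _ => ?_
      rw [mul_smul_comm, mul_left_comm]

lemma sum_dd_pow (i : Fin N) (k : ℕ) :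
    pderiv i (X i ^ k : Poly N) + ∑ j, dd i j (X i ^ k) =
      ∑ a ∈ range k, X i ^ a * psum (Fin N) ℂ (k - 1 - a) := by
  have h1 : ∑ j, dd i j (X i ^ k : Poly N) =
      ∑ j ∈ univ.erase i, ∑ a ∈ range k, X i ^ a * X j ^ (k - 1 - a) := by
    rw [← add_sum_erase univ _ (mem_univ i), dd_self, zero_add]
    exact sum_congr rfl fun j hj => dd_pow (mem_erase.1 hj).1.symm k
  have h2 : pderiv i (X i ^ k : Poly N) = ∑ a ∈ range k, X i ^ a * X i ^ (k - 1 - a) := by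
    rw [Derivation.leibniz_pow, pderiv_X_self,
      sum_congr rfl (g := fun _ => (X i ^ (k - 1) : Poly N))]
    · simp
    · intro a ha
      rw [← pow_add]
      congr 1
      have := mem_range.1 ha
      omega
  rw [h1, h2, add_sum_erase univ (fun j => ∑ a ∈ range k, (X i ^ a * X j ^ (k - 1 - a) : Poly N))
    (mem_univ i), sum_comm]
  simp only [psum, mul_sum]

lemma dunkl_pow_mul_P (i : Fin N) (k : ℕ) (μs : List ℕ) :
    dunkl d t i (X i ^ k * P N μs) =
      (∑ j ∈ range (d + 1), t (j + 1) • (X i ^ (k + j) * P N μs))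
      - (∑ j ∈ range k, X i ^ j * P N ((k - 1 - j) :: μs))
      - (∑ a : Fin μs.length,
          (μs.get a : ℂ) • (X i ^ (k + μs.get a - 1) * P N (μs.eraseIdx a))) := by
  have h1 : pot d t i * (X i ^ k * P N μs) =
      ∑ j ∈ range (d + 1), t (j + 1) • (X i ^ (k + j) * P N μs) := by
    rw [pot, sum_mul]
    refine sum_congr rfl fun j _ => ?_
    rw [smul_mul_assoc, pow_add]
    congr 1
    ring
  have h2 : ∀ j, dd i j (X i ^ k * P N μs) = dd i j (X i ^ k) * P N μs := fun j => by
    rw [dd_mul, perm_P, dd_eq_zero i j (perm_P _ _), mul_zero, zero_add]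
  have h3 : ∑ j ∈ range k, X i ^ j * P N ((k - 1 - j) :: μs) =
      (∑ a ∈ range k, X i ^ a * psum (Fin N) ℂ (k - 1 - a)) * P N μs := by
    rw [sum_mul]
    refine sum_congr rfl fun j _ => ?_
    rw [P_cons, mul_assoc]
  have h4 : X i ^ k * pderiv i (P N μs) = ∑ a : Fin μs.length,
      (μs.get a : ℂ) • (X i ^ (k + μs.get a - 1) * P N (μs.eraseIdx a)) := by
    rw [pderiv_P, mul_sum]
    refine sum_congr rfl fun a _ => ?_
    rcases Nat.eq_zero_or_pos (μs.get a) with h0 | h0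
    -- A zero entry contributes nothing, so truncated subtraction is harmless.
    · rw [h0]
      simp
    · rw [mul_smul_comm, ← mul_assoc, ← pow_add, Nat.add_sub_assoc h0]
  rw [dunkl_apply, h1, Derivation.leibniz, sum_congr rfl fun j _ => h2 j, ← sum_mul, h3,
    ← sum_dd_pow, ← h4]
  simp only [smul_eq_mul]
  ring

/-- The recursion for `F^{(l)}` is solved by powers of the Dunkl operators. -/
lemma F2_eq (l k : ℕ) (μs : List ℕ) :
    ((F2 N d t l k μs : SymPoly N) : Poly N) = ∑ i, (dunkl d t i ^ l) (X i ^ k * P N μs) := by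
  induction l generalizing k μs with
  | zero =>
    simp only [F2, pow_zero, Module.End.one_apply, ← sum_mul]
    rfl
  | succ l ih =>
    simp only [F2, AddSubgroupClass.coe_sub, AddSubmonoidClass.coe_finsetSum, Subalgebra.coe_smul,
      ih, pow_succ (dunkl d t _) l, Module.End.mul_apply, dunkl_pow_mul_P, map_sub, map_sum,
      map_smul, sum_sub_distrib, smul_sum]
    congr 1
    · congr 1
      · exact sum_comm
      · exact sum_comm
    · exact sum_comm

/-- The loop-equation polynomials are the sums of the loop operators over all variables. -/
lemma Q2_eq (k : ℕ) (μs : List ℕ) :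
    ((Q2 N d dt t tt k μs : SymPoly N) : Poly N) =
      ∑ i, loopOp d t dt tt i (X i ^ k * P N μs) := by
  simp only [Q2, AddSubgroupClass.coe_sub, AddSubmonoidClass.coe_finsetSum, Subalgebra.coe_smul,
    F2_eq, loopOp_apply, sum_sub_distrib, smul_sum]
  congr 1
  · exact sum_comm
  · change psum (Fin N) ℂ (k + 1) * P N μs = _
    rw [psum, sum_mul]
    exact sum_congr rfl fun i _ => by ring

/-! ### Symmetrization -/

/-- The (unnormalized) symmetrization. -/
noncomputable def symz (N : ℕ) : Poly N →ₗ[ℂ] Poly N := ∑ σ : Equiv.Perm (Fin N), perm σ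

lemma symz_apply (f : Poly N) : symz N f = ∑ σ, perm σ f := by simp [symz]

lemma symz_perm (τ : Equiv.Perm (Fin N)) (f : Poly N) : symz N (perm τ f) = symz N f := by
  simp only [symz_apply, perm_perm]
  exact Equiv.sum_comp (Equiv.mulRight τ) fun σ => perm σ f

lemma symz_isSymmetric (f : Poly N) : (symz N f).IsSymmetric := by
  intro τ
  change perm τ (symz N f) = symz N f
  simp only [symz_apply, map_sum, perm_perm]
  exact Equiv.sum_comp (Equiv.mulLeft τ) fun σ => perm σ f

lemma symz_of_isSymmetric {f : Poly N} (hf : f.IsSymmetric) :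
    symz N f = (N.factorial : ℂ) • f := by
  rw [symz_apply, sum_congr rfl fun σ _ => perm_of_isSymmetric hf σ, sum_const, card_univ,
    Fintype.card_perm, Fintype.card_fin, Nat.cast_smul_eq_nsmul]

/-- The subspace `L`, viewed inside the full polynomial ring. -/
noncomputable def loopSpace (N d : ℕ) (t : ℕ → ℂ) (dt : ℕ) (tt : ℕ → ℂ) : Submodule ℂ (Poly N) :=
  (L2 N d dt t tt).map (symmetricSubalgebra (Fin N) ℂ).val.toLinearMap

lemma sum_loopOp_mem (k : ℕ) (μs : List ℕ) :
    ∑ i, loopOp d t dt tt i (X i ^ k * P N μs) ∈ loopSpace N d t dt tt := by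
  rw [← Q2_eq]
  have : Q2 N d dt t tt k μs ∈ L2 N d dt t tt := Submodule.subset_span ⟨k, μs, rfl⟩
  exact ⟨_, this, rfl⟩

lemma loopSpace_le : loopSpace N d t dt tt ≤ ⨆ i, LinearMap.range (loopOp d t dt tt i) := by
  rw [loopSpace, L2, Submodule.map_span, Submodule.span_le]
  rintro _ ⟨_, ⟨k, μs, rfl⟩, rfl⟩
  change ((Q2 N d dt t tt k μs : SymPoly N) : Poly N) ∈ _
  rw [Q2_eq]
  exact sum_mem fun i _ => Submodule.mem_iSup_of_mem i (LinearMap.mem_range_self _ _)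

/-- The polynomials `g` such that symmetrizing `A_i (g p_μ)` gives an element of `L` for all `μ`. -/
noncomputable def good (N d : ℕ) (t : ℕ → ℂ) (dt : ℕ) (tt : ℕ → ℂ) (i : Fin N) :
    Submodule ℂ (Poly N) :=
  ⨅ μs : List ℕ, (loopSpace N d t dt tt).comap
    (symz N ∘ₗ loopOp d t dt tt i ∘ₗ LinearMap.mulRight ℂ (P N μs))

lemma mem_good {i : Fin N} {g : Poly N} : g ∈ good N d t dt tt i ↔
    ∀ μs, symz N (loopOp d t dt tt i (g * P N μs)) ∈ loopSpace N d t dt tt := by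
  simp [good]

lemma mul_psum_mem_good {i : Fin N} {g : Poly N} (hg : g ∈ good N d t dt tt i) (k : ℕ) :
    g * psum (Fin N) ℂ k ∈ good N d t dt tt i := by
  rw [mem_good] at hg ⊢
  intro μs
  have := hg (k :: μs)
  rwa [P_cons, ← mul_assoc] at this

lemma sub_perm_mem_good {i : Fin N} {τ : Equiv.Perm (Fin N)} (hτ : τ i = i) (g : Poly N) :
    g - perm τ g ∈ good N d t dt tt i := by
  rw [mem_good]
  intro μs
  have : symz N (loopOp d t dt tt i (perm τ g * P N μs)) =
      symz N (loopOp d t dt tt i (g * P N μs)) := by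
    rw [← symz_perm τ (loopOp d t dt tt i (g * P N μs)), perm_loopOp, perm_mul, perm_P, hτ]
  rw [sub_mul, map_sub, map_sub, this, sub_self]
  exact zero_mem _

/-- Here `N · Sym A_i (x_i^k p_μ) = Sym Q_{k;μ} = N! · Q_{k;μ}`. -/
lemma X_pow_mem_good (i : Fin N) (k : ℕ) : (X i ^ k : Poly N) ∈ good N d t dt tt i := by
  rw [mem_good]
  intro μs
  have hQ : (∑ j, loopOp d t dt tt j (X j ^ k * P N μs)).IsSymmetric := by
    rw [← Q2_eq]
    exact (mem_symmetricSubalgebra _).1 (Q2 N d dt t tt k μs).2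
  have h1 := symz_of_isSymmetric hQ
  have h2 : ∀ j, symz N (loopOp d t dt tt j (X j ^ k * P N μs)) =
      symz N (loopOp d t dt tt i (X i ^ k * P N μs)) := fun j => by
    rw [← symz_perm (Equiv.swap i j) (loopOp d t dt tt i _), perm_loopOp, perm_mul, perm_P,
      Equiv.swap_apply_left]
    congr 3
    simp [perm]
  rw [map_sum, sum_congr rfl fun j _ => h2 j, sum_const, card_univ, Fintype.card_fin,
    ← Nat.cast_smul_eq_nsmul ℂ] at h1
  have hN : (N : ℂ) ≠ 0 := by
    rw [Nat.cast_ne_zero]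
    rintro rfl
    exact i.elim0
  refine (Submodule.smul_mem_iff _ hN).1 ?_
  rw [h1]
  exact Submodule.smul_mem _ _ (sum_loopOp_mem d t dt tt k μs)

/-- Modulo the differences `g - τ g` with `τ i = i`, every monomial lies in the algebra generated
by `x_i` and the power sums; the induction is on the number of variables other than `x_i`. -/
lemma monomial_mem_good (i : Fin N) (m : Fin N →₀ ℕ) :
    (monomial m 1 : Poly N) ∈ good N d t dt tt i := by
  classical
  induction hs : (m.support.erase i).card using Nat.strong_induction_on generalizing m with
  | _ s ih =>
    by_cases h0 : m.support.erase i = ∅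
    · have : m = Finsupp.single i (m i) := by
        ext j
        by_cases hj : i = j
        · subst hj
          simp
        · rw [Finsupp.single_eq_of_ne (Ne.symm hj)]
          by_contra hne
          have : j ∈ m.support.erase i := mem_erase.2 ⟨Ne.symm hj, Finsupp.mem_support_iff.2 hne⟩
          rw [h0] at this
          exact absurd this (Finset.notMem_empty _)
      rw [this, ← X_pow_eq_monomial]
      exact X_pow_mem_good d t dt tt i _
    obtain ⟨j, hj⟩ := Finset.nonempty_iff_ne_empty.2 h0
    have hji : j ≠ i := (mem_erase.1 hj).1
    set m' := m.erase j with hm'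
    set e := m j with he
    have hm : m = m' + Finsupp.single j e := (Finsupp.erase_add_single j m).symm
    have hcard : (m'.support.erase i).card < s := by
      rw [hm', Finsupp.support_erase, erase_right_comm, ← hs]
      exact card_erase_lt_of_mem hj
    have hprod := mul_psum_mem_good d t dt tt (ih _ hcard m' rfl) e
    have hexp : (monomial m' 1 : Poly N) * psum (Fin N) ℂ e =
        ∑ l, monomial (m' + Finsupp.single l e) 1 := by
      rw [psum, mul_sum]
      refine sum_congr rfl fun l _ => ?_
      rw [X_pow_eq_monomial, monomial_mul, one_mul]
    let T : Finset (Fin N) := univ.filter fun l => l ∉ m'.support ∧ l ≠ i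
    have hT : ∀ l ∈ T, (monomial m 1 : Poly N) - monomial (m' + Finsupp.single l e) 1 ∈
        good N d t dt tt i := by
      intro l hl
      obtain ⟨hl1, hl2⟩ := (mem_filter.1 hl).2
      have hperm : perm (Equiv.swap j l) (monomial m 1 : Poly N) =
          monomial (m' + Finsupp.single l e) 1 := by
        change rename (Equiv.swap j l) (monomial m (1 : ℂ)) = _
        rw [rename_monomial, hm, Finsupp.mapDomain_add, Finsupp.mapDomain_single,
          Equiv.swap_apply_left]
        congr 2
        ext x
        rw [Finsupp.add_apply, Finsupp.add_apply, Finsupp.mapDomain_equiv_apply, Equiv.symm_swap]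
        congr 1
        have hj0 : m' j = 0 := Finsupp.erase_same
        have hl0 : m' l = 0 := Finsupp.notMem_support_iff.1 hl1
        rcases eq_or_ne x j with rfl | hxj
        · rw [Equiv.swap_apply_left, hj0, hl0]
        rcases eq_or_ne x l with rfl | hxl
        · rw [Equiv.swap_apply_right, hj0, hl0]
        · rw [Equiv.swap_apply_of_ne_of_ne hxj hxl]
      rw [← hperm]
      exact sub_perm_mem_good d t dt tt (Equiv.swap_apply_of_ne_of_ne hji.symm hl2.symm) _
    have hTc : ∀ l ∈ univ.filter (fun l => ¬ (l ∉ m'.support ∧ l ≠ i)),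
        (monomial (m' + Finsupp.single l e) 1 : Poly N) ∈ good N d t dt tt i := by
      intro l hl
      have hl' := (mem_filter.1 hl).2
      refine ih _ (lt_of_le_of_lt (card_le_card ?_) hcard) _ rfl
      intro x hx
      obtain ⟨hxi, hx⟩ := mem_erase.1 hx
      refine mem_erase.2 ⟨hxi, ?_⟩
      rcases Finset.mem_union.1 (Finsupp.support_add hx) with h | h
      · exact h
      · have := Finset.mem_singleton.1 (Finsupp.support_single_subset h)
        subst this
        by_contra hc
        exact hl' ⟨hc, hxi⟩
    rw [hexp, ← sum_filter_add_sum_filter_not univ fun l => l ∉ m'.support ∧ l ≠ i] at hprod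
    have h1 := (Submodule.add_mem_iff_left _ (sum_mem hTc)).1 hprod
    have h2 := add_mem (sum_mem hT) h1
    rw [sum_sub_distrib, sub_add_cancel, sum_const, ← Nat.cast_smul_eq_nsmul ℂ] at h2
    refine (Submodule.smul_mem_iff _ ?_).1 h2
    rw [Nat.cast_ne_zero]
    exact card_ne_zero_of_mem (mem_filter.2
      ⟨mem_univ j, by simp [hm'], hji⟩)

/-- Symmetrizing the image of `A_i` gives elements of `L`; this is the case `μ = ∅` of
`monomial_mem_good`. -/
lemma symz_loopOp_mem (i : Fin N) (g : Poly N) :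
    symz N (loopOp d t dt tt i g) ∈ loopSpace N d t dt tt := by
  obtain ⟨n, hn⟩ := exists_mem_LT g
  have := (mem_good d t dt tt).1 (LT_le (fun m _ => monomial_mem_good d t dt tt i m) hn) []
  rwa [P_nil, mul_one] at this

/-! ### The dimension -/

/-- `P_N` is the direct sum of `L` and the symmetric polynomials with all exponents `< d d̃`. -/
lemma isCompl_L2 (hd : 1 ≤ d) (hddt : 2 ≤ d * dt) (ht : t (d + 1) ≠ 0) (htt : tt (dt + 1) ≠ 0) :
    IsCompl (L2 N d dt t tt) (symBox N (d * dt)) := by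
  set c : ℂ := tt (dt + 1) * t (d + 1) ^ dt with hc
  have hc0 : c ≠ 0 := mul_ne_zero htt (pow_ne_zero _ ht)
  have hcompl : IsCompl (⨆ i, LinearMap.range (loopOp (N := N) d t dt tt i)) (box N (d * dt)) := by
    have := isCompl_box (N := N) (B := fun i => c⁻¹ • loopOp d t dt tt i) (D := d * dt)
      (fun i j => ((loopOp_commute d t dt tt i j).smul_left _).smul_right _) (by omega)
      (fun i => by
        have := (loopOp_symbol d t dt tt hd hddt i).smul c⁻¹
        rwa [smul_smul, ← hc, inv_mul_cancel₀ hc0, one_smul] at this)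
    have hr : ∀ i, LinearMap.range (c⁻¹ • loopOp (N := N) d t dt tt i) =
        LinearMap.range (loopOp d t dt tt i) :=
      fun i => LinearMap.range_smul _ _ (inv_ne_zero hc0)
    simpa only [hr] using this
  constructor
  · rw [Submodule.disjoint_def]
    intro x hx hx'
    exact Subtype.ext ((Submodule.disjoint_def.1 hcompl.disjoint) (x : Poly N)
      (loopSpace_le d t dt tt (Submodule.mem_map_of_mem hx)) hx')
  · rw [codisjoint_iff_le_sup]
    intro x _
    have hx : (x : Poly N).IsSymmetric := (mem_symmetricSubalgebra _).1 x.2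
    obtain ⟨u, hu, w, hw, huw⟩ := Submodule.mem_sup.1
      (hcompl.codisjoint.eq_top.ge (Submodule.mem_top : (x : Poly N) ∈ ⊤))
    have hu' : symz N u ∈ loopSpace N d t dt tt := by
      refine (iSup_le fun i => ?_ : _ ≤ (loopSpace N d t dt tt).comap (symz N)) hu
      rintro _ ⟨g, rfl⟩
      exact symz_loopOp_mem d t dt tt i g
    -- Symmetrizing `x = u + w` gives `N! • x = symz u + symz w`, with `symz u ∈ L`.
    have hw' : symz N w ∈ box N (d * dt) := by
      rw [symz_apply]
      exact sum_mem fun σ _ => perm_mem_box σ hw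
    obtain ⟨u', hu'L, hu'e⟩ := hu'
    let w' : SymPoly N := ⟨symz N w, (mem_symmetricSubalgebra _).2 (symz_isSymmetric w)⟩
    have hw'B : w' ∈ symBox N (d * dt) := hw'
    have hfact : (N.factorial : ℂ) ≠ 0 := Nat.cast_ne_zero.2 (Nat.factorial_ne_zero N)
    refine (Submodule.smul_mem_iff _ hfact).1 ?_
    have e : (N.factorial : ℂ) • x = u' + w' := by
      apply Subtype.ext
      change (N.factorial : ℂ) • (x : Poly N) = (u' : Poly N) + symz N w
      rw [← symz_of_isSymmetric hx, ← huw, map_add, ← hu'e]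
      rfl
    rw [e]
    exact Submodule.add_mem_sup hu'L hw'B

end LoopEq

theorem stmt13 (N d dt : ℕ) (hN : 1 ≤ N) (hd : 1 ≤ d) (hdt : 1 ≤ dt)
    (hddt : 2 ≤ d * dt) (t tt : ℕ → ℂ) (ht : t (d + 1) ≠ 0) (htt : tt (dt + 1) ≠ 0) :
    Module.rank ℂ ((L2 N d dt t tt).dualAnnihilator) = (N + d * dt - 1).choose N := by
  obtain ⟨e⟩ := LoopEq.nonempty_equiv_symBox N (d * dt)
  have hq : (SymPoly N ⧸ L2 N d dt t tt) ≃ₗ[ℂ] (Sym (Fin (d * dt)) N → ℂ) :=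
    (Submodule.quotientEquivOfIsCompl _ _
      (LoopEq.isCompl_L2 d t dt tt hd hddt ht htt)).trans e.symm
  have hdual : (L2 N d dt t tt).dualAnnihilator ≃ₗ[ℂ]
      Module.Dual ℂ (Sym (Fin (d * dt)) N → ℂ) :=
    (Submodule.dualQuotEquivDualAnnihilator _).symm.trans hq.symm.dualMap
  rw [hdual.rank_eq, ← Module.finrank_eq_rank, Subspace.dual_finrank_eq,
    Module.finrank_fintype_fun_eq_card, Sym.card_sym_eq_choose, Fintype.card_fin, add_comm]
end
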